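/- For every integer k ≥ 3 and every δ > 0, there exist η > 0 and N₀ such that the following holds for all N ≥ N₀: if S ⊆ Z_N is nonempty and the function ν := (N/|S|)·1_S satisfies the k-linear forms condition within η, then every subset A ⊆ S with |A| ≥ δ|S| contains a k-term arithmetic progression; that is, there exist x ∈ Z_N and d ∈ Z_N with d ≠ 0 such that x, x+d, x+2d, …, x+(k−1)d ∈ A. -/

import Mathlib

/-!
The proof transfers Szemerédi's theorem from dense subsets of `ZMod N` to dense subsets of the
pseudorandom set `S`. Write `m = N / |S|`, `ν = m 1_S` and `f = m 1_A`, so that `0 ≤ f ≤ ν` and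
`f` has average at least `δ`.

**Dense case.** The density Hales–Jewett theorem is proved by induction on the alphabet. If it fails
for `Option α`, take a line-free set of almost critical density. The theorem for `α` supplies many
lines whose points with letters in `α` all lie in the set, and the last points of these lines avoid
it. Hence the set is denser on a large intersection of insensitive sets, one for each `a : α`. Such
an intersection is covered almost uniformly by combinatorial subspaces, and on one of them the
density exceeds the critical one, a contradiction. Averaging over the maps `w ↦ x + ∑ i, w i • d i`
from words to a finite abelian group gives Szemerédi's theorem with multiplicity: a `[0, 1]`-valued
function `g` of average at least `δ` satisfies `𝔼 ∏ j, g (x + j d) ≥ c(δ) > 0`.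

**Transference.** As `j` varies, the forms `∑ i, (i - j) x i` run through an arithmetic progression,
and the `j`-th form does not involve the `j`-th variable. By repeated application of the
Cauchy–Schwarz inequality, the linear forms condition shows that `ν - 1` is nearly orthogonal to the
products of functions each missing one more variable. A minimax argument and Weierstrass
approximation then produce `g : ZMod N → [0, 1]` which is close to `f` in the cut norm of each form.
Multiplication by the coefficients `i - j` need not be invertible, but its kernel on
`Fin k → ZMod N` has at most `k ^ k` elements, which costs only a constant factor; so no coprimality
assumption on `N` is needed.

**Counting.** Replacing the factors `f` by `g` in the count of progressions makes a small error. The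
weights are treated one at a time: averaging over the `j`-th variable the product of the other
factors gives a function which, by the linear forms condition, is nearly bounded by `1`, so that one
weight fewer is present. Hence `𝔼 ∏ j, f (x + j d) ≥ c / 2`.

**Trivial progressions.** Progressions with `d = 0` contribute at most `m ^ (k - 1) / N`. The linear
forms condition itself implies `m ^ (2 (k - 1)) ≤ 3 N`, so this contribution tends to `0`, and for
large `N` some progression with `d ≠ 0` lies in `A`.
-/

open Finset

/-- The average (expectation with respect to the uniform measure) of `f` over `α`. -/
noncomputable def avg {α : Type*} [Fintype α] (f : α → ℝ) : ℝ :=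
  (∑ x, f x) / (Fintype.card α)

/-- The linear form `∑_{i} (i - j) · x_i^{(ω_i)}` in `ZMod N`, where for `i ≠ j` the
variable `x_i^{(ω_i)}` equals `x₁ i` if `ω i` and `x₀ i` otherwise (the `i = j` term has
coefficient zero). -/
noncomputable def kForm (k N : ℕ) [NeZero N] (j : Fin k)
    (x₀ x₁ : Fin k → ZMod N) (ω : {i : Fin k // i ≠ j} → Bool) : ZMod N :=
  ∑ i : Fin k, ((((i : ℕ) : ℤ) - ((j : ℕ) : ℤ) : ℤ) : ZMod N) *
    (if h : i = j then 0 else if ω ⟨i, h⟩ then x₁ i else x₀ i)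

/-- `ν : ZMod N → ℝ` satisfies the `k`-linear forms condition within `η`. -/
noncomputable def kLinearFormsCondition (k N : ℕ) [NeZero N] (ν : ZMod N → ℝ) (η : ℝ) :
    Prop :=
  ∀ n : (j : Fin k) → ({i : Fin k // i ≠ j} → Bool) → Bool,
    |avg (fun x : (Fin k → ZMod N) × (Fin k → ZMod N) =>
      ∏ j : Fin k, ∏ ω : {i : Fin k // i ≠ j} → Bool,
        if n j ω then ν (kForm k N j x.1 x.2 ω) else 1) - 1| ≤ η

namespace RelativeSzemeredi

open Combinatorics
open scoped BigOperators

/-! ### Averages and densities -/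

section Expectation
variable {X Y : Type*} [Fintype X] [Fintype Y]

lemma expect_prod_type (f : X × Y → ℝ) : 𝔼 p, f p = 𝔼 x, 𝔼 y, f (x, y) := by
  rw [← univ_product_univ, expect_product]

lemma expect_sum_arrow {κ μ B : Type*} [Fintype κ] [Fintype μ] [Fintype B] [DecidableEq κ]
    [DecidableEq μ] (f : (κ ⊕ μ → B) → ℝ) :
    𝔼 w, f w = 𝔼 x : κ → B, 𝔼 y : μ → B, f (Sum.elim x y) := by
  rw [← Fintype.expect_equiv (Equiv.sumArrowEquivProdArrow κ μ B).symm _ f fun _ => rfl,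
    expect_prod_type]
  rfl

lemma expect_comp_restrict {κ B : Type*} [Fintype κ] [Fintype B] [Nonempty B] [DecidableEq κ]
    (P : κ → Prop) [DecidablePred P] (f : ({t // P t} → B) → ℝ) :
    𝔼 z : κ → B, f (fun t => z t) = 𝔼 z, f z := by
  rw [Fintype.expect_equiv (Equiv.piEquivPiSubtypeProd P fun _ => B)
    (fun z => f fun t => z t) (fun p => f p.1) fun _ => rfl, expect_prod_type]
  simp only [Fintype.expect_const]

lemma expect_prod_pow {κ Ω : Type*} [Fintype κ] [Fintype Ω] [DecidableEq κ] (g : Ω → ℝ) :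
    𝔼 c : κ → Ω, ∏ t, g (c t) = (𝔼 o, g o) ^ Fintype.card κ := by
  rw [Fintype.expect_eq_sum_div_card, Fintype.expect_eq_sum_div_card, div_pow,
    Fintype.card_fun, Nat.cast_pow]
  congr 1
  simpa using (prod_univ_sum (fun _ : κ => univ) fun _ => g).symm

/-- A coordinatewise bijection of `Ω × B` resamples the letters of a random word over `Ω`. -/
lemma expect_resample {κ Ω B : Type*} [Fintype κ] [Fintype Ω] [Fintype B] [Nonempty B]
    [DecidableEq κ] (σ : Ω × B ≃ Ω × B) (F : (κ → Ω) → ℝ) :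
    𝔼 c, F c = 𝔼 c : κ → Ω, 𝔼 z : κ → B, F fun t => (σ (c t, z t)).1 := by
  calc 𝔼 c, F c = 𝔼 p : (κ → Ω) × (κ → B), F p.1 := by
        simp only [expect_prod_type, Fintype.expect_const]
    _ = 𝔼 q : κ → Ω × B, F fun t => (q t).1 :=
        (Fintype.expect_equiv (Equiv.arrowProdEquivProdArrow κ (fun _ => Ω) fun _ => B)
          _ _ fun _ => rfl).symm
    _ = 𝔼 q : κ → Ω × B, F fun t => (σ (q t)).1 :=
        (Fintype.expect_equiv (Equiv.piCongrRight fun _ : κ => σ) _ _ fun _ => rfl).symm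
    _ = _ := by
        rw [← expect_prod_type fun p : (κ → Ω) × (κ → B) => F fun t => (σ (p.1 t, p.2 t)).1]
        exact Fintype.expect_equiv (Equiv.arrowProdEquivProdArrow κ (fun _ => Ω) fun _ => B)
          _ _ fun _ => rfl

end Expectation

/-- The density of a subset of a finite type, as a real number. -/
noncomputable def density {X : Type*} [Fintype X] (A : Set X) : ℝ := 𝔼 x, A.indicator 1 x

section Density
variable {X Y : Type*} [Fintype X] [Fintype Y]

lemma density_nonneg (A : Set X) : 0 ≤ density A :=
  expect_nonneg fun _ _ => Set.indicator_nonneg (fun _ _ => zero_le_one) _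

lemma density_mono {A B : Set X} (h : A ⊆ B) : density A ≤ density B :=
  expect_le_expect fun _ _ => Set.indicator_le_indicator_of_subset h (fun _ => zero_le_one) _

omit [Fintype X] in
lemma indicator_one_le_one (A : Set X) (x : X) : A.indicator (1 : X → ℝ) x ≤ 1 :=
  Set.indicator_le_self' (fun _ _ => zero_le_one) x

lemma density_univ [Nonempty X] : density (Set.univ : Set X) = 1 := by
  simp [density]

lemma density_empty : density (∅ : Set X) = 0 := by
  simp [density]

lemma density_le_one (A : Set X) : density A ≤ 1 := by
  cases isEmpty_or_nonempty X
  · simp [density]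
  · exact (density_mono A.subset_univ).trans_eq density_univ

lemma density_comp_equiv (e : X ≃ Y) (A : Set Y) : density {x | e x ∈ A} = density A :=
  Fintype.expect_equiv e _ _ fun _ => rfl

lemma density_inter_add_diff (A B : Set X) : density (A ∩ B) + density (A \ B) = density A := by
  simp only [density, ← expect_add_distrib]
  refine expect_congr rfl fun x _ => ?_
  by_cases hA : x ∈ A <;> by_cases hB : x ∈ B <;> simp [hA, hB]

lemma density_compl [Nonempty X] (A : Set X) : density Aᶜ = 1 - density A := by
  have := density_inter_add_diff Set.univ A
  rw [Set.univ_inter, ← Set.compl_eq_univ_sdiff, density_univ] at this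
  linarith

lemma nonempty_of_density_pos {A : Set X} (h : 0 < density A) : A.Nonempty := by
  by_contra hA
  rw [Set.not_nonempty_iff_eq_empty.mp hA, density_empty] at h
  exact h.false

lemma density_sum_arrow {κ μ B : Type*} [Fintype κ] [Fintype μ] [Fintype B] [DecidableEq κ]
    [DecidableEq μ] (A : Set (κ ⊕ μ → B)) :
    density A = 𝔼 x : κ → B, density {y : μ → B | Sum.elim x y ∈ A} :=
  expect_sum_arrow _

lemma density_sum_arrow' {κ μ B : Type*} [Fintype κ] [Fintype μ] [Fintype B] [DecidableEq κ]
    [DecidableEq μ] (A : Set (κ ⊕ μ → B)) :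
    density A = 𝔼 y : μ → B, density {x : κ → B | Sum.elim x y ∈ A} :=
  (expect_sum_arrow _).trans (expect_comm _ _ _)

lemma half_le_density_of_le_expect [Nonempty X] {f : X → ℝ} {c : ℝ} (hf : ∀ x, f x ≤ 1)
    (hc : 0 ≤ c) (h : c ≤ 𝔼 x, f x) : c / 2 ≤ density {x | c / 2 ≤ f x} := by
  have : 𝔼 x, f x ≤ 𝔼 x, (c / 2 + ({x | c / 2 ≤ f x} : Set X).indicator 1 x) := by
    refine expect_le_expect fun x _ => ?_
    by_cases hx : c / 2 ≤ f x
    · simpa [hx] using by linarith [hf x]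
    · simpa [hx] using (not_le.mp hx).le
  rw [expect_add_distrib, Fintype.expect_const] at this
  unfold density
  linarith

lemma exists_notMem_half_le [Nonempty X] {f : X → ℝ} {c : ℝ} (hf : ∀ x, f x ≤ 1) (hc : 0 < c)
    (h : c ≤ 𝔼 x, f x) {S : Set X} (hS : density S ≤ c / 4) : ∃ x ∉ S, c / 2 ≤ f x := by
  by_contra! hsmall
  have : 𝔼 x, f x ≤ 𝔼 x, (c / 2 + S.indicator 1 x) := by
    refine expect_le_expect fun x _ => ?_
    by_cases hx : x ∈ S
    · simpa [hx] using by linarith [hf x]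
    · simpa [hx] using (hsmall x hx).le
  rw [expect_add_distrib, Fintype.expect_const] at this
  unfold density at hS
  linarith

lemma exists_div_card_le_density_inter {V : Type*} [Finite V] {c : ℝ} (B : V → Set X) {A : Set X}
    (hA : ∀ x ∈ A, ∃ v, x ∈ B v) (hc : 0 < c) (h : c ≤ density A) :
    ∃ v, c / Nat.card V ≤ density (A ∩ B v) := by
  cases nonempty_fintype V
  have hsum : density A ≤ ∑ v, density (A ∩ B v) := by
    unfold density
    rw [← expect_sum_comm]
    refine expect_le_expect fun x _ => ?_
    by_cases hx : x ∈ A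
    · obtain ⟨v, hv⟩ := hA x hx
      calc A.indicator 1 x = (A ∩ B v).indicator (1 : X → ℝ) x := by simp [hx, hv]
        _ ≤ _ := single_le_sum (f := fun v => (A ∩ B v).indicator (1 : X → ℝ) x)
          (fun _ _ => Set.indicator_nonneg (fun _ _ => zero_le_one) x) (mem_univ v)
    · simp [hx]
  obtain ⟨x, hx⟩ := nonempty_of_density_pos (hc.trans_le h)
  have : Nonempty V := ⟨(hA x hx).choose⟩
  have havg : c / Nat.card V ≤ 𝔼 v, density (A ∩ B v) := by
    rw [Fintype.expect_eq_sum_div_card, Nat.card_eq_fintype_card]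
    exact div_le_div_of_nonneg_right (h.trans hsum) (Nat.cast_nonneg _)
  obtain ⟨v, -, hv⟩ := exists_le_of_le_expect univ_nonempty havg
  exact ⟨v, hv⟩

/-- The bound comes from the exponential moment of the number of occurrences. -/
lemma exists_density_card_lt_le {Ω : Type*} [Fintype Ω] (P : Ω → Prop) [DecidablePred P]
    (hP : ∃ o, P o) (m : ℕ) {ε : ℝ} (hε : 0 < ε) :
    ∃ n, ∀ (κ : Type) [Fintype κ] [DecidableEq κ], n ≤ Fintype.card κ →
      density {c : κ → Ω | Fintype.card {t // P (c t)} < m} ≤ ε := by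
  obtain ⟨o, ho⟩ := hP
  have : Nonempty Ω := ⟨o⟩
  set g : Ω → ℝ := fun o => if P o then 1 / 2 else 1 with hg
  have hg_nonneg (o : Ω) : 0 ≤ g o := by rw [hg]; positivity
  have hg_lt : 𝔼 o, g o < 1 := by
    calc 𝔼 o, g o < 𝔼 _o : Ω, (1 : ℝ) := by
          refine expect_lt_expect (fun o _ => ?_) ⟨o, mem_univ _, ?_⟩
          · simp only [hg]; split_ifs <;> norm_num
          · simp only [hg, if_pos ho]; norm_num
      _ = 1 := Fintype.expect_const 1
  have hg_expect : 0 ≤ 𝔼 o, g o := expect_nonneg fun o _ => hg_nonneg o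
  obtain ⟨n, hn⟩ := exists_pow_lt_of_lt_one (show 0 < ε * (1 / 2) ^ m by positivity) hg_lt
  refine ⟨n, fun κ _ _ hκ => ?_⟩
  refine le_of_mul_le_mul_right ?_ (show (0 : ℝ) < (1 / 2) ^ m by positivity)
  calc density {c : κ → Ω | Fintype.card {t // P (c t)} < m} * (1 / 2) ^ m
      ≤ 𝔼 c : κ → Ω, ∏ t, g (c t) := by
        rw [density, expect_mul]
        refine expect_le_expect fun c _ => ?_
        by_cases hc : Fintype.card {t // P (c t)} < m
        · have : ∏ t, g (c t) = (1 / 2) ^ Fintype.card {t // P (c t)} := by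
            simp [hg, prod_ite, Fintype.card_subtype]
          rw [this, Set.indicator_of_mem (by exact hc), Pi.one_apply, one_mul]
          exact pow_le_pow_of_le_one (by norm_num) (by norm_num) hc.le
        · rw [Set.indicator_of_notMem (by exact hc), zero_mul]
          exact prod_nonneg fun t _ => hg_nonneg _
    _ = (𝔼 o, g o) ^ Fintype.card κ := expect_prod_pow g
    _ ≤ (𝔼 o, g o) ^ n := pow_le_pow_of_le_one hg_expect hg_lt.le hκ
    _ ≤ ε * (1 / 2) ^ m := hn.le

/-- The letters `e (z t)` refill the positions of a word `c` whose letter lies in the range of `e`;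
these positions are the parameters of the subspace. -/
lemma exists_subspace_half_le_expect {B Ω : Type} [Fintype B] [Nonempty B] [Fintype Ω]
    {e : B → Ω} (he : Function.Injective e) (m : ℕ) {θ : ℝ} (hθ : 0 < θ) :
    ∃ n, ∀ (κ : Type) [Fintype κ] [DecidableEq κ], n ≤ Fintype.card κ →
      ∀ F : (κ → Ω) → ℝ, (∀ c, F c ≤ 1) → θ ≤ 𝔼 c, F c →
      ∃ (T : Type) (_ : Fintype T) (_ : DecidableEq T) (l : Subspace T Ω κ),
        m ≤ Fintype.card T ∧ θ / 2 ≤ 𝔼 z : T → B, F (l (e ∘ z)) := by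
  classical
  let resample (p : Ω × B) : Ω × B :=
    if h : ∃ b, e b = p.1 then (e p.2, h.choose) else p
  have hresample : Function.Involutive resample := by
    rintro ⟨o, b⟩
    by_cases h : ∃ b, e b = o
    · have h' : ∃ b', e b' = e b := ⟨b, rfl⟩
      simp [resample, h, he h'.choose_spec, h.choose_spec]
    · simp [resample, h]
  have : Nonempty Ω := ⟨e (Classical.arbitrary B)⟩
  obtain ⟨n, hn⟩ := exists_density_card_lt_le (fun o => ∃ b, e b = o)
    ⟨e (Classical.arbitrary B), _, rfl⟩ m (ε := θ / 4) (by positivity)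
  refine ⟨n, fun κ _ _ hκ F hF hFθ => ?_⟩
  rw [expect_resample hresample.toPerm] at hFθ
  obtain ⟨c, hcm, hc⟩ := exists_notMem_half_le
    (fun c => expect_le univ_nonempty fun z _ => hF _) hθ hFθ (hn κ hκ)
  let l : Subspace {t // ∃ b, e b = c t} Ω κ :=
    ⟨fun t => if h : ∃ b, e b = c t then Sum.inr ⟨t, h⟩ else Sum.inl (c t),
      fun t => ⟨t, dif_pos t.2⟩⟩
  refine ⟨{t // ∃ b, e b = c t}, inferInstance, inferInstance, l, not_lt.mp hcm, hc.trans_eq ?_⟩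
  rw [← expect_comp_restrict (fun t => ∃ b, e b = c t)]
  refine expect_congr rfl fun z _ => congrArg F (funext fun t => ?_)
  by_cases h : ∃ b, e b = c t <;> simp [l, Subspace.coe_apply, resample, h]

end Density

/-! ### Combinatorial lines and subspaces -/

section Subspaces
variable {α β η η' ι κ : Type*}

/-- The composition of two combinatorial subspaces, as maps between spaces of words. -/
def subspaceComp (l : Subspace η α ι) (l' : Subspace η' α η) : Subspace η' α ι where
  idxFun i := (l.idxFun i).elim Sum.inl l'.idxFun
  proper e := by
    obtain ⟨j, hj⟩ := l'.proper e
    obtain ⟨i, hi⟩ := l.proper j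
    exact ⟨i, by simp [hi, hj]⟩

@[simp]
lemma subspaceComp_apply (l : Subspace η α ι) (l' : Subspace η' α η) (x : η' → α) :
    subspaceComp l l' x = l (l' x) := by
  ext i
  cases h : l.idxFun i <;> simp [subspaceComp, Subspace.coe_apply, h]

/-- The image of a combinatorial line under a combinatorial subspace. -/
def lineComp (l : Subspace η α ι) (m : Line α η) : Line α ι where
  idxFun i := (l.idxFun i).elim some m.idxFun
  proper := by
    obtain ⟨j, hj⟩ := m.proper
    obtain ⟨i, hi⟩ := l.proper j
    exact ⟨i, by simp [hi, hj]⟩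

lemma lineComp_apply (l : Subspace η α ι) (m : Line α η) (a : α) :
    lineComp l m a = l (m a) := by
  ext i
  cases h : l.idxFun i <;> simp [lineComp, Subspace.coe_apply, h]

/-- The combinatorial subspace obtained by applying `f` to the constant letters. -/
def subspaceMap (f : α → β) (l : Subspace η α ι) : Subspace η β ι where
  idxFun i := (l.idxFun i).map f id
  proper e := (l.proper e).imp fun i hi => by simp [hi]

lemma subspaceMap_apply_comp (f : α → β) (l : Subspace η α ι) (x : η → α) :
    subspaceMap f l (f ∘ x) = f ∘ l x := by
  ext i
  cases h : l.idxFun i <;> simp [subspaceMap, Subspace.coe_apply, h]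

/-- A word over `ι` followed by a combinatorial subspace of the words over `κ`. -/
def subspaceVertical (v : ι → α) (l : Subspace η α κ) : Subspace η α (ι ⊕ κ) where
  idxFun := Sum.elim (Sum.inl ∘ v) l.idxFun
  proper e := (l.proper e).elim fun i hi => ⟨Sum.inr i, hi⟩

@[simp]
lemma subspaceVertical_apply (v : ι → α) (l : Subspace η α κ) (x : η → α) :
    subspaceVertical v l x = Sum.elim v (l x) := by
  ext (i | i) <;> rfl

/-- A combinatorial subspace of the words over `ι` followed by a word over `κ`. -/
def subspaceHorizontal (l : Subspace η α ι) (v : κ → α) : Subspace η α (ι ⊕ κ) where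
  idxFun := Sum.elim l.idxFun (Sum.inl ∘ v)
  proper e := (l.proper e).elim fun i hi => ⟨Sum.inl i, hi⟩

@[simp]
lemma subspaceHorizontal_apply (l : Subspace η α ι) (v : κ → α) (x : η → α) :
    subspaceHorizontal l v x = Sum.elim (l x) v := by
  ext (i | i) <;> rfl

/-- The combinatorial subspace of all words, reindexed along an equivalence of coordinates. -/
def subspaceOfEquiv (α : Type*) (e : ι ≃ η) : Subspace η α ι :=
  ⟨fun i => Sum.inr (e i), fun j => ⟨e.symm j, by simp⟩⟩

@[simp]
lemma subspaceOfEquiv_apply (e : ι ≃ η) (x : η → α) : subspaceOfEquiv α e x = x ∘ e := rfl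

/-- The product of a combinatorial line, with parameter `0`, and a combinatorial subspace. -/
def subspaceCons {n : ℕ} (m : Line α ι) (l : Subspace (Fin n) α κ) :
    Subspace (Fin (n + 1)) α (ι ⊕ κ) where
  idxFun := Sum.elim (fun i => (m.idxFun i).elim (Sum.inr 0) Sum.inl)
    fun j => (l.idxFun j).map id Fin.succ
  proper e := by
    induction e using Fin.cases with
    | zero => exact m.proper.elim fun i hi => ⟨Sum.inl i, by simp [hi]⟩
    | succ e => exact (l.proper e).elim fun j hj => ⟨Sum.inr j, by simp [hj]⟩

@[simp]
lemma subspaceCons_apply {n : ℕ} (m : Line α ι) (l : Subspace (Fin n) α κ)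
    (x : Fin (n + 1) → α) : subspaceCons m l x = Sum.elim (m (x 0)) (l (Fin.tail x)) := by
  ext (i | j)
  · cases h : m.idxFun i <;> simp [subspaceCons, Subspace.coe_apply, h]
  · cases h : l.idxFun j <;> simp [subspaceCons, Subspace.coe_apply, h, Fin.tail]

lemma subspace_injective (l : Subspace η α ι) : Function.Injective l := by
  intro x y h
  ext e
  obtain ⟨i, hi⟩ := l.proper e
  simpa [Subspace.apply_inr hi] using congrFun h i

instance [Finite α] [Finite ι] : Finite (Line α ι) :=
  Finite.of_injective Line.idxFun fun _ _ => Line.ext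

instance [Finite η] [Finite α] [Finite ι] : Finite (Subspace η α ι) :=
  Finite.of_injective Subspace.idxFun fun _ _ => Subspace.ext

end Subspaces

/-! ### The density Hales–Jewett property -/

/-- Sets of words over `α` of density at least `δ` contain a combinatorial line as soon as the
number of coordinates is large. -/
def DensityHalesJewettAt (α : Type) [Fintype α] (δ : ℝ) : Prop :=
  ∃ n : ℕ, ∀ (ι : Type) [Fintype ι] [DecidableEq ι], n ≤ Fintype.card ι →
    ∀ A : Set (ι → α), δ ≤ density A → ∃ l : Line α ι, ∀ a, l a ∈ A

/-- The density Hales–Jewett property of the alphabet `α`. -/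
def DensityHalesJewett (α : Type) [Fintype α] : Prop :=
  ∀ δ : ℝ, 0 < δ → DensityHalesJewettAt α δ

lemma exists_equiv_fin_sum_fin {ι : Type*} [Fintype ι] {s n : ℕ} (h : s + n ≤ Fintype.card ι) :
    ∃ r, n ≤ r ∧ Nonempty (ι ≃ Fin s ⊕ Fin r) :=
  ⟨Fintype.card ι - s, by omega, ⟨Fintype.equivOfCardEq (by simp; omega)⟩⟩

lemma density_comp_arrow_equiv {ι κ α : Type*} [Fintype ι] [Fintype κ] [Fintype α] [DecidableEq ι]
    [DecidableEq κ] (e : ι ≃ κ) (A : Set (ι → α)) : density {z : κ → α | z ∘ e ∈ A} = density A :=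
  density_comp_equiv (e.arrowCongr (Equiv.refl α)).symm A

section DensityHalesJewett
variable {α : Type} [Fintype α]

lemma DensityHalesJewett.exists_subspace [Nonempty α] (h : DensityHalesJewett α) (m : ℕ) :
    ∀ δ : ℝ, 0 < δ → ∃ n : ℕ, ∀ (ι : Type) [Fintype ι] [DecidableEq ι], n ≤ Fintype.card ι →
      ∀ A : Set (ι → α), δ ≤ density A → ∃ l : Subspace (Fin m) α ι, ∀ x, l x ∈ A := by
  induction m with
  | zero =>
    intro δ hδ
    refine ⟨0, fun ι _ _ _ A hA => ?_⟩
    obtain ⟨a, ha⟩ := nonempty_of_density_pos (hδ.trans_le hA)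
    exact ⟨⟨Sum.inl ∘ a, finZeroElim⟩, fun _ => ha⟩
  | succ m ih =>
    intro δ hδ
    obtain ⟨s, hs⟩ := h (δ / 2) (by positivity)
    obtain ⟨n, hn⟩ := ih (δ / 2 / (Nat.card (Line α (Fin s)) + 1)) (by positivity)
    refine ⟨s + n, fun ι _ _ hι A hA => ?_⟩
    obtain ⟨r, hr, ⟨e⟩⟩ := exists_equiv_fin_sum_fin hι
    rw [← density_comp_arrow_equiv e, density_sum_arrow'] at hA
    have hdense := half_le_density_of_le_expect (fun y => density_le_one _) hδ.le hA
    obtain ⟨v, hv⟩ := exists_div_card_le_density_inter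
      (fun (v : Line α (Fin s)) => {y : Fin r → α | ∀ a, Sum.elim (v a) y ∘ e ∈ A})
      (fun y hy => hs (Fin s) (by simp) {x | Sum.elim x y ∘ e ∈ A} hy) (by positivity) hdense
    have hpos : (0 : ℝ) < Nat.card (Line α (Fin s)) := by
      exact_mod_cast Nat.card_pos_iff.mpr ⟨⟨v⟩, inferInstance⟩
    obtain ⟨l, hl⟩ := hn (Fin r) (by simpa using hr) _
      ((div_le_div_of_nonneg_left (by positivity) hpos (by linarith)).trans hv)
    refine ⟨subspaceComp (subspaceOfEquiv α e) (subspaceCons v l), fun x => ?_⟩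
    simpa using (hl (Fin.tail x)).2 (x 0)

/-! ### Insensitive sets -/

variable {ι η : Type*}

/-- The word `z` with the extra letter `none` replaced by `a`. -/
def collapse (a : α) (z : ι → Option α) : ι → Option α := fun i => some ((z i).getD a)

/-- Membership in `E` is not affected by exchanging the letters `none` and `some a`. -/
def Insensitive (a : α) (E : Set (ι → Option α)) : Prop := ∀ z, z ∈ E ↔ collapse a z ∈ E

omit [Fintype α]

lemma collapse_subspace_collapse (a : α) (l : Subspace η (Option α) ι) (x : η → Option α) :
    collapse a (l (collapse a x)) = collapse a (l x) := by
  ext1 i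
  cases h : l.idxFun i <;> simp [collapse, Subspace.coe_apply, h]

lemma Insensitive.preimage_subspace {a : α} {E : Set (ι → Option α)} (h : Insensitive a E)
    (l : Subspace η (Option α) ι) : Insensitive a {x | l x ∈ E} := by
  intro x
  rw [Set.mem_ofPred_eq, Set.mem_ofPred_eq, h, h (l (collapse a x)), collapse_subspace_collapse]

lemma Insensitive.compl {a : α} {E : Set (ι → Option α)} (h : Insensitive a E) :
    Insensitive a Eᶜ :=
  fun z => not_congr (h z)

lemma Insensitive.inter {a : α} {E F : Set (ι → Option α)} (hE : Insensitive a E)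
    (hF : Insensitive a F) : Insensitive a (E ∩ F) :=
  fun z => and_congr (hE z) (hF z)

/-- An insensitive set is determined by its words without the letter `none`, to which the density
Hales–Jewett property of `α` applies. -/
lemma DensityHalesJewett.exists_subspace_of_insensitive [Fintype α] [Nonempty α]
    (h : DensityHalesJewett α) (m : ℕ) {δ : ℝ} (hδ : 0 < δ) :
    ∃ n : ℕ, ∀ (ι : Type) [Fintype ι] [DecidableEq ι], n ≤ Fintype.card ι →
      ∀ (a : α) (E : Set (ι → Option α)), Insensitive a E → δ ≤ density E →
        ∃ l : Subspace (Fin m) (Option α) ι, ∀ x, l x ∈ E := by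
  obtain ⟨n₁, hn₁⟩ := h.exists_subspace m (δ / 2) (by positivity)
  obtain ⟨n, hn⟩ := exists_subspace_half_le_expect (Option.some_injective α) n₁ hδ
  refine ⟨n, fun ι _ _ hι a E hE hd => ?_⟩
  obtain ⟨T, _, _, l, hT, hl⟩ := hn ι hι _ (indicator_one_le_one E) hd
  obtain ⟨l', hl'⟩ := hn₁ T hT {z | l (some ∘ z) ∈ E} hl
  refine ⟨subspaceComp l (subspaceMap some l'), fun x => ?_⟩
  have hmem : subspaceComp l (subspaceMap some l') (collapse a x) ∈ E := by
    rw [subspaceComp_apply]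
    exact subspaceMap_apply_comp some l' (fun e => (x e).getD a) ▸ hl' _
  rw [hE, collapse_subspace_collapse] at hmem
  exact (hE _).2 hmem

end DensityHalesJewett

/-! ### Fractional packings by subspaces -/

section Packing
variable {B ι κ : Type} [Fintype B] [Fintype ι] [DecidableEq ι] [Fintype κ] [DecidableEq κ] {m : ℕ}

/-- A fractional packing of `E` by `m`-dimensional combinatorial subspaces satisfying `P`: a
nonnegative combination, of total mass at least `r`, of the uniform measures on such subspaces that
is dominated by the restriction to `E` of the uniform measure. -/
def HasPacking (P : Subspace (Fin m) B ι → Prop) (E : Set (ι → B)) (r : ℝ) : Prop :=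
  ∃ (J : Type) (_ : Fintype J) (w : J → ℝ) (l : J → Subspace (Fin m) B ι),
    (∀ j, 0 ≤ w j) ∧ (∀ j, P (l j)) ∧
    (∀ f : (ι → B) → ℝ, 0 ≤ f → ∑ j, w j * 𝔼 x, f (l j x) ≤ 𝔼 z, E.indicator f z) ∧ r ≤ ∑ j, w j

variable {P P' : Subspace (Fin m) B ι → Prop} {E E' : Set (ι → B)} {r r' : ℝ}

lemma HasPacking.mono (h : HasPacking P E r) (hP : ∀ l, P l → P' l) (hr : r' ≤ r) :
    HasPacking P' E r' := by
  obtain ⟨J, hJ, w, l, hw, hl, hf, hmass⟩ := h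
  exact ⟨J, hJ, w, l, hw, fun j => hP _ (hl j), hf, hr.trans hmass⟩

lemma hasPacking_of_nonpos (hr : r ≤ 0) : HasPacking P E r :=
  ⟨Empty, inferInstance, fun _ => 0, Empty.rec, Empty.rec, Empty.rec,
    fun f hf => by simpa using expect_nonneg fun z _ => Set.indicator_nonneg (fun z _ => hf z) z,
    by simpa using hr⟩

lemma HasPacking.of_arrow_equiv (e : ι ≃ κ)
    (h : HasPacking (fun l => P (subspaceComp (subspaceOfEquiv B e) l)) {z | z ∘ e ∈ E} r) :
    HasPacking P E r := by
  obtain ⟨J, hJ, w, l, hw, hl, hf, hmass⟩ := h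
  refine ⟨J, hJ, w, _, hw, hl, fun f hf0 => ?_, hmass⟩
  simp only [subspaceComp_apply, subspaceOfEquiv_apply]
  exact (hf (fun z => f (z ∘ e)) fun z => hf0 _).trans_eq
    (Fintype.expect_equiv (e.arrowCongr (Equiv.refl B)).symm _ _ fun _ => rfl)

lemma HasPacking.union (hE : HasPacking P E r) (hE' : HasPacking P E' r') (hd : Disjoint E E') :
    HasPacking P (E ∪ E') (r + r') := by
  obtain ⟨J, hJ, w, l, hw, hl, hf, hmass⟩ := hE
  obtain ⟨J', hJ', w', l', hw', hl', hf', hmass'⟩ := hE'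
  refine ⟨J ⊕ J', inferInstance, Sum.elim w w', Sum.elim l l', Sum.forall.2 ⟨hw, hw'⟩,
    Sum.forall.2 ⟨hl, hl'⟩, fun f hf0 => ?_, ?_⟩
  · simp only [Fintype.sum_sum_type, Sum.elim_inl, Sum.elim_inr,
      Set.indicator_union_of_disjoint hd, expect_add_distrib]
    exact add_le_add (hf f hf0) (hf' f hf0)
  · simpa only [Fintype.sum_sum_type, Sum.elim_inl, Sum.elim_inr] using add_le_add hmass hmass'

lemma HasPacking.comp {M : ℕ} {Q : Subspace (Fin M) B ι → Prop} (hr' : 0 ≤ r')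
    (h : HasPacking Q E r)
    (h' : ∀ l, Q l → HasPacking (fun l' => P (subspaceComp l l')) Set.univ r') :
    HasPacking P E (r * r') := by
  obtain ⟨J, hJ, w, l, hw, hl, hf, hmass⟩ := h
  choose K hK v l' hv hl' hf' hmass' using fun j => h' (l j) (hl j)
  refine ⟨Σ j, K j, inferInstance, fun p => w p.1 * v p.1 p.2,
    fun p => subspaceComp (l p.1) (l' p.1 p.2), fun p => mul_nonneg (hw _) (hv _ _),
    fun p => hl' _ _, fun f hf0 => ?_, ?_⟩
  · rw [Fintype.sum_sigma]
    refine le_trans (sum_le_sum fun j _ => ?_) (hf f hf0)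
    simpa only [mul_sum, mul_assoc, subspaceComp_apply, Set.indicator_univ] using
      mul_le_mul_of_nonneg_left (hf' j (fun z => f (l j z)) fun z => hf0 _) (hw j)
  · rw [Fintype.sum_sigma]
    calc r * r' ≤ (∑ j, w j) * r' := mul_le_mul_of_nonneg_right hmass hr'
      _ = ∑ j, w j * r' := sum_mul _ _ _
      _ ≤ ∑ j, w j * ∑ k, v j k :=
        sum_le_sum fun j _ => mul_le_mul_of_nonneg_left (hmass' j) (hw j)
      _ = ∑ j, ∑ k, w j * v j k := sum_congr rfl fun j _ => mul_sum _ _ _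

lemma HasPacking.of_fibers {P : Subspace (Fin m) B (ι ⊕ κ) → Prop} {E : Set (ι ⊕ κ → B)}
    {r : (ι → B) → ℝ}
    (h : ∀ x, HasPacking (fun l => P (subspaceVertical x l)) {y | Sum.elim x y ∈ E} (r x)) :
    HasPacking P E (𝔼 x, r x) := by
  choose J hJ w l hw hl hf hmass using h
  refine ⟨Σ x, J x, inferInstance, fun p => w p.1 p.2 / Fintype.card (ι → B),
    fun p => subspaceVertical p.1 (l p.1 p.2), fun p => div_nonneg (hw _ _) (Nat.cast_nonneg _),
    fun p => hl _ _, fun f hf0 => ?_, ?_⟩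
  · rw [Fintype.sum_sigma, expect_sum_arrow, Fintype.expect_eq_sum_div_card, sum_div]
    refine sum_le_sum fun x _ => ?_
    calc ∑ j, w x j / Fintype.card (ι → B) * 𝔼 y, f (subspaceVertical x (l x j) y)
        = (∑ j, w x j * 𝔼 y, f (Sum.elim x (l x j y))) / Fintype.card (ι → B) := by
          simp only [subspaceVertical_apply, sum_div, div_mul_eq_mul_div]
      _ ≤ _ := div_le_div_of_nonneg_right (hf x (fun y => f (Sum.elim x y)) fun y => hf0 _)
          (Nat.cast_nonneg _)
  · rw [Fintype.sum_sigma, Fintype.expect_eq_sum_div_card, sum_div]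
    refine sum_le_sum fun x _ => ?_
    rw [← sum_div]
    exact div_le_div_of_nonneg_right (hmass x) (Nat.cast_nonneg _)

lemma HasPacking.of_fibers' {P : Subspace (Fin m) B (ι ⊕ κ) → Prop} {E : Set (ι ⊕ κ → B)}
    {r : (κ → B) → ℝ}
    (h : ∀ y, HasPacking (fun l => P (subspaceHorizontal l y)) {x | Sum.elim x y ∈ E} (r y)) :
    HasPacking P E (𝔼 y, r y) := by
  refine .of_arrow_equiv (Equiv.sumComm ι κ) (.of_fibers fun y => ?_)
  have hswap (x : ι → B) : Sum.elim y x ∘ Equiv.sumComm ι κ = Sum.elim x y := by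
    ext (i | i) <;> rfl
  have hcomp (l : Subspace (Fin m) B ι) : subspaceComp (subspaceOfEquiv B (Equiv.sumComm ι κ))
      (subspaceVertical y l) = subspaceHorizontal l y := by
    ext1; ext1 (i | i) <;> rfl
  simpa only [hcomp, Set.mem_ofPred_eq, hswap] using h y

lemma expect_indicator_range {X Z : Type*} [Fintype X] [Fintype Z] [Nonempty X] {φ : X → Z}
    (hφ : Function.Injective φ) (f : Z → ℝ) :
    𝔼 z, (Set.range φ).indicator f z = Fintype.card X / Fintype.card Z * 𝔼 x, f (φ x) := by
  have hsum : ∑ x, f (φ x) = ∑ z, (Set.range φ).indicator f z :=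
    sum_of_injOn φ hφ.injOn (fun _ _ => mem_coe.mpr (mem_univ _))
      (fun z _ hz => Set.indicator_of_notMem (by simpa using hz) f)
      fun x _ => (Set.indicator_of_mem (Set.mem_range_self x) f).symm
  rw [Fintype.expect_eq_sum_div_card, Fintype.expect_eq_sum_div_card, ← hsum]
  field_simp

lemma density_range {X Z : Type*} [Fintype X] [Fintype Z] [Nonempty X] {φ : X → Z}
    (hφ : Function.Injective φ) :
    density (Set.range φ) = Fintype.card X / Fintype.card Z := by
  simpa [density] using expect_indicator_range hφ 1

lemma hasPacking_range [Nonempty B] {l : Subspace (Fin m) B ι} (hl : P l) :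
    HasPacking P (Set.range l) (density (Set.range l)) := by
  refine ⟨Unit, inferInstance, fun _ => density (Set.range l), fun _ => l,
    fun _ => density_nonneg _, fun _ => hl, fun f _ => ?_, by simp⟩
  simp [expect_indicator_range (subspace_injective l), density_range (subspace_injective l)]

end Packing

section InsensitivePacking
variable {α : Type}

lemma collapse_sum_elim_right {ι κ : Type*} (a : α) (x : ι → Option α) (y : κ → Option α) :
    collapse a (Sum.elim x (collapse a y)) = collapse a (Sum.elim x y) := by
  ext1 (i | i) <;> rfl

lemma collapse_sum_elim_left {ι κ : Type*} (a : α) (x : ι → Option α) (y : κ → Option α) :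
    collapse a (Sum.elim (collapse a x) y) = collapse a (Sum.elim x y) := by
  ext1 (i | i) <;> rfl

lemma Insensitive.fiber {ι κ : Type*} {a : α} {E : Set (ι ⊕ κ → Option α)} (h : Insensitive a E)
    (x : ι → Option α) : Insensitive a {y : κ → Option α | Sum.elim x y ∈ E} := by
  intro y
  rw [Set.mem_ofPred_eq, Set.mem_ofPred_eq, h, h (Sum.elim x (collapse a y)),
    collapse_sum_elim_right]

lemma Insensitive.fiber' {ι κ : Type*} {a : α} {E : Set (ι ⊕ κ → Option α)} (h : Insensitive a E)
    (y : κ → Option α) : Insensitive a {x : ι → Option α | Sum.elim x y ∈ E} := by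
  intro x
  rw [Set.mem_ofPred_eq, Set.mem_ofPred_eq, h, h (Sum.elim (collapse a x) y),
    collapse_sum_elim_left]

lemma Insensitive.comp_equiv {ι κ : Type*} {a : α} {E : Set (ι → Option α)} (h : Insensitive a E)
    (e : ι ≃ κ) : Insensitive a {z : κ → Option α | z ∘ e ∈ E} :=
  fun z => h (z ∘ e)

lemma Insensitive.fiber_sdiff {ι κ : Type*} {a : α} {E : Set (ι ⊕ κ → Option α)}
    (hE : Insensitive a E) (R : Set (ι → Option α)) {Y : Set (κ → Option α)}
    (hY : Insensitive a Y) (x : ι → Option α) :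
    Insensitive a {y | Sum.elim x y ∈ E \ {z | z ∘ Sum.inl ∈ R ∧ z ∘ Sum.inr ∈ Y}} := by
  by_cases hx : x ∈ R
  · have : {y | Sum.elim x y ∈ E \ {z | z ∘ Sum.inl ∈ R ∧ z ∘ Sum.inr ∈ Y}} =
        {y | Sum.elim x y ∈ E} ∩ Yᶜ := by
      ext y
      simp [hx]
    exact this ▸ (hE.fiber x).inter hY.compl
  · simpa [hx] using hE.fiber x

lemma density_inl_mem_and_inr_mem {ι κ β : Type*} [Fintype ι] [DecidableEq ι] [Fintype κ]
    [DecidableEq κ] [Fintype β] (R : Set (ι → β)) (Y : Set (κ → β)) :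
    density {z : ι ⊕ κ → β | z ∘ Sum.inl ∈ R ∧ z ∘ Sum.inr ∈ Y} = density R * density Y := by
  rw [density_sum_arrow', show density Y = 𝔼 y, Y.indicator 1 y from rfl, mul_expect]
  refine expect_congr rfl fun y _ => ?_
  by_cases hy : y ∈ Y <;> simp [hy, density_empty]

variable [Fintype α] [Nonempty α]

/-- The set `E₁` is the product of a subspace with an insensitive set. -/
lemma Insensitive.exists_packed_subset {s m : ℕ} {β : ℝ} (hβ : 0 < β) {a : α}
    (hs : ∀ E : Set (Fin s → Option α), Insensitive a E → β / 2 ≤ density E →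
      ∃ l : Subspace (Fin m) (Option α) (Fin s), ∀ x, l x ∈ E)
    {κ : Type} [Fintype κ] [DecidableEq κ] {E : Set (Fin s ⊕ κ → Option α)}
    (hE : Insensitive a E) (hd : β ≤ density E) :
    ∃ E₁ ⊆ E, (∀ x, Insensitive a {y | Sum.elim x y ∈ E \ E₁}) ∧
      (Fintype.card (Fin m → Option α) / Fintype.card (Fin s → Option α) : ℝ) *
        (β / 2 / Nat.card (Subspace (Fin m) (Option α) (Fin s))) ≤ density E₁ ∧
      HasPacking (fun l : Subspace (Fin m) (Option α) _ => ∀ x, l x ∈ E) E₁ (density E₁) := by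
  rw [density_sum_arrow'] at hd
  obtain ⟨l, hl⟩ := exists_div_card_le_density_inter
    (fun (l : Subspace (Fin m) (Option α) (Fin s)) => {y | ∀ x, Sum.elim (l x) y ∈ E})
    (fun y hy => hs _ (hE.fiber' y) hy) (by positivity)
    (half_le_density_of_le_expect (fun _ => density_le_one _) hβ.le hd)
  set Y : Set (κ → Option α) := {y | ∀ x, Sum.elim (l x) y ∈ E}
  have hYins : Insensitive a Y := fun y => forall_congr' fun x => hE.fiber (l x) y
  set E₁ : Set (Fin s ⊕ κ → Option α) := {z | z ∘ Sum.inl ∈ Set.range l ∧ z ∘ Sum.inr ∈ Y} with hE₁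
  refine ⟨E₁, ?_, fun x => ?_, ?_, ?_⟩
  · rintro z ⟨⟨x, hx⟩, hz⟩
    rw [← Sum.elim_comp_inl_inr z, ← hx]
    exact hz x
  · exact hE.fiber_sdiff _ hYins x
  · rw [density_inl_mem_and_inr_mem, density_range (subspace_injective l)]
    exact mul_le_mul_of_nonneg_left (hl.trans (density_mono Set.inter_subset_right))
      (by positivity)
  · rw [density_sum_arrow']
    refine .of_fibers' fun y => ?_
    by_cases hy : y ∈ Y
    · have : {x | Sum.elim x y ∈ E₁} = Set.range l := by ext x; simp [hE₁, hy]
      rw [this]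
      exact hasPacking_range fun x => subspaceHorizontal_apply l y x ▸ hy x
    · have : {x | Sum.elim x y ∈ E₁} = ∅ := by ext x; simp [hE₁, hy]
      rw [this]
      exact hasPacking_of_nonpos density_empty.le

/-- Greedy packing of an insensitive set by subspaces contained in it: as long as the leftover has
density at least `β`, every stage multiplies it by at most `q`. -/
lemma DensityHalesJewett.exists_packing_subset (h : DensityHalesJewett α) (m : ℕ) {β : ℝ}
    (hβ : 0 < β) (hβ1 : β ≤ 1) : ∃ q : ℝ, 0 ≤ q ∧ q < 1 ∧ ∀ T : ℕ, ∃ n : ℕ, ∀ (ι : Type)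
      [Fintype ι] [DecidableEq ι], n ≤ Fintype.card ι → ∀ (a : α) (E : Set (ι → Option α)),
        Insensitive a E → HasPacking (fun l : Subspace (Fin m) (Option α) ι => ∀ x, l x ∈ E) E
          ((1 - q ^ T) * density E - β) := by
  obtain ⟨s, hs⟩ := h.exists_subspace_of_insensitive m (δ := β / 2) (by positivity)
  have : Nonempty (Subspace (Fin m) (Option α) (Fin s)) :=
    have a : α := Classical.arbitrary α
    ⟨(hs _ (by simp) a Set.univ (fun _ => Iff.rfl) (by rw [density_univ]; linarith)).choose⟩
  set γ : ℝ := (Fintype.card (Fin m → Option α) / Fintype.card (Fin s → Option α) : ℝ) *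
    (β / 2 / (Nat.card (Subspace (Fin m) (Option α) (Fin s))))
  have hγ_pos : 0 < γ :=
    mul_pos (by positivity) (div_pos (by positivity) (Nat.cast_pos.mpr Nat.card_pos))
  have hq : 0 ≤ max 0 (1 - γ) := le_max_left _ _
  refine ⟨max 0 (1 - γ), hq, max_lt one_pos (by linarith), fun T => ?_⟩
  induction T with
  | zero => exact ⟨0, fun ι _ _ _ a E _ => hasPacking_of_nonpos (by simpa using hβ.le)⟩
  | succ T ih =>
    obtain ⟨n, hn⟩ := ih
    refine ⟨s + n, fun ι _ _ hι a E hE => ?_⟩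
    by_cases hd : density E < β
    · exact hasPacking_of_nonpos
        (by nlinarith [mul_nonneg (pow_nonneg hq (T + 1)) (density_nonneg E)])
    obtain ⟨r, hr, ⟨e⟩⟩ := exists_equiv_fin_sum_fin hι
    refine .of_arrow_equiv e ?_
    rw [← density_comp_arrow_equiv e E] at hd ⊢
    obtain ⟨E₁, hE₁, hins, hdens, hpack⟩ := (hE.comp_equiv e).exists_packed_subset hβ
      (hs _ (by simp) a) (not_lt.mp hd)
    have hκ : 1 - max 0 (1 - γ) ≤ density E₁ := by
      linarith [le_max_right 0 (1 - γ)]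
    set E' : Set (Fin s ⊕ Fin r → Option α) := {z | z ∘ e ∈ E}
    have hrest := HasPacking.of_fibers (P := fun l : Subspace (Fin m) (Option α) _ =>
      ∀ x, l x ∈ E' \ E₁) fun x => (hn (Fin r) (by simpa using hr) a _ (hins x)).mono
        (fun l hl y => by simpa using hl y) le_rfl
    have hunion := hpack.union (hrest.mono (fun l hl x => (hl x).1) le_rfl)
      Set.disjoint_sdiff_right
    rw [Set.union_sdiff_cancel hE₁, expect_sub_distrib, Fintype.expect_const, ← mul_expect,
      ← density_sum_arrow] at hunion
    refine hunion.mono (fun l hl x => by simpa [E'] using hl x) ?_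
    have hdiff : density (E' \ E₁) = density E' - density E₁ := by
      rw [← density_inter_add_diff E' E₁, Set.inter_eq_right.mpr hE₁, add_sub_cancel_left]
    have hgain : (1 - max 0 (1 - γ)) * density E' ≤ density E₁ :=
      (mul_le_of_le_one_right (sub_nonneg.mpr (max_le zero_le_one (by linarith)))
        (density_le_one _)).trans hκ
    rw [pow_succ, hdiff]
    nlinarith [mul_le_mul_of_nonneg_left hgain (pow_nonneg hq T)]

lemma isMono_subspaceComp {B ι η η' C : Type*} {f : (ι → B) → C} {l : Subspace η B ι}
    (hl : l.IsMono f) (l' : Subspace η' B η) : (subspaceComp l l').IsMono f := by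
  obtain ⟨c, hc⟩ := hl
  exact ⟨c, fun x => by rw [subspaceComp_apply, hc]⟩

lemma DensityHalesJewett.exists_packing_isMono (h : DensityHalesJewett α) (m : ℕ) {ε : ℝ}
    (hε : 0 < ε) (hε1 : ε ≤ 1) : ∃ n : ℕ, ∀ (ι : Type) [Fintype ι] [DecidableEq ι],
      n ≤ Fintype.card ι → ∀ (a : α) (E : Set (ι → Option α)), Insensitive a E →
        HasPacking (fun l : Subspace (Fin m) (Option α) ι => l.IsMono (· ∈ E))
          Set.univ (1 - ε) := by
  obtain ⟨q, hq0, hq1, hq⟩ := h.exists_packing_subset m (β := ε / 4) (by positivity) (by linarith)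
  obtain ⟨T, hT⟩ := exists_pow_lt_of_lt_one (show 0 < ε / 4 by positivity) hq1
  obtain ⟨n, hn⟩ := hq T
  refine ⟨n, fun ι _ _ hι a E hE => ?_⟩
  have hpack := ((hn ι hι a E hE).mono (P' := fun l => l.IsMono (· ∈ E))
    (fun l hl => ⟨True, fun x => eq_true (hl x)⟩) le_rfl).union
    ((hn ι hι a Eᶜ hE.compl).mono (fun l hl => ⟨False, fun x => eq_false (hl x)⟩) le_rfl)
    disjoint_compl_right
  rw [Set.union_compl_self] at hpack
  refine hpack.mono (fun _ hl => hl) ?_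
  rw [density_compl]
  linarith [pow_nonneg hq0 T]

lemma DensityHalesJewett.exists_packing_forall_isMono (h : DensityHalesJewett α) (s : Finset α)
    (m : ℕ) {ε : ℝ} (hε : 0 < ε) (hε1 : ε ≤ 1) : ∃ n : ℕ, ∀ (ι : Type) [Fintype ι]
      [DecidableEq ι], n ≤ Fintype.card ι → ∀ E : α → Set (ι → Option α),
        (∀ a, Insensitive a (E a)) → HasPacking
          (fun l : Subspace (Fin m) (Option α) ι => ∀ a ∈ s, l.IsMono (· ∈ E a))
          Set.univ (1 - ε) := by
  classical
  induction s using Finset.induction_on generalizing m ε with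
  | empty =>
    obtain ⟨n, hn⟩ := h.exists_packing_isMono m hε hε1
    exact ⟨n, fun ι _ _ hι E hE => (hn ι hι (Classical.arbitrary α) _ (hE _)).mono
      (by simp) le_rfl⟩
  | insert b s _ ih =>
    obtain ⟨M, hM⟩ := ih m (half_pos hε) (by linarith)
    obtain ⟨n, hn⟩ := h.exists_packing_isMono M (half_pos hε) (by linarith)
    refine ⟨n, fun ι _ _ hι E hE => ?_⟩
    refine ((hn ι hι b _ (hE b)).comp (r' := 1 - ε / 2) (by linarith) fun l hl =>
      (hM (Fin M) (by simp) (fun a => {x | l x ∈ E a}) fun a => (hE a).preimage_subspace l).mono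
        (fun l' hl' a ha => ?_) le_rfl).mono (fun _ hl => hl) (by nlinarith)
    obtain rfl | ha := mem_insert.mp ha
    · exact isMono_subspaceComp hl l'
    · simpa only [Subspace.IsMono, subspaceComp_apply, Set.mem_ofPred_eq] using hl' a ha

end InsensitivePacking

/-! ### The density Hales–Jewett theorem -/

section CriticalDensity
variable {α : Type} [Fintype α]

lemma DensityHalesJewettAt.mono {δ δ' : ℝ} (h : DensityHalesJewettAt α δ) (hδ : δ ≤ δ') :
    DensityHalesJewettAt α δ' :=
  h.imp fun _ hn ι _ _ hι A hA => hn ι hι A (hδ.trans hA)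

lemma densityHalesJewettAt_of_one_lt {δ : ℝ} (hδ : 1 < δ) : DensityHalesJewettAt α δ :=
  ⟨0, fun _ _ _ _ A hA => absurd (hδ.trans_le hA) (density_le_one A).not_gt⟩

lemma exists_critical_density (h : ¬ DensityHalesJewett α) :
    ∃ s : ℝ, 0 < s ∧ s ≤ 1 ∧ (∀ γ > 0, DensityHalesJewettAt α (s + γ)) ∧
      ∀ γ > 0, ¬ DensityHalesJewettAt α (s - γ) := by
  obtain ⟨δ₀, hδ₀, hbad⟩ : ∃ δ₀, 0 < δ₀ ∧ ¬ DensityHalesJewettAt α δ₀ := by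
    simpa [DensityHalesJewett] using h
  set G : Set ℝ := {δ | DensityHalesJewettAt α δ}
  have hlb : ∀ δ ∈ G, δ₀ ≤ δ := fun δ hδ => not_lt.mp fun hlt => hbad (hδ.mono hlt.le)
  have hG : ∀ δ > 1, δ ∈ G := fun δ hδ => densityHalesJewettAt_of_one_lt hδ
  have hne : G.Nonempty := ⟨2, hG 2 one_lt_two⟩
  refine ⟨sInf G, hδ₀.trans_le (le_csInf hne hlb), ?_, fun γ hγ => ?_, fun γ hγ hmem => ?_⟩
  · exact le_of_forall_gt_imp_ge_of_dense fun δ hδ => csInf_le ⟨δ₀, hlb⟩ (hG δ hδ)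
  · obtain ⟨δ, hδ, hlt⟩ := exists_lt_of_csInf_lt hne (lt_add_of_pos_right (sInf G) hγ)
    exact DensityHalesJewettAt.mono hδ hlt.le
  · exact (sub_lt_self (sInf G) hγ).not_ge (csInf_le ⟨δ₀, hlb⟩ hmem)

lemma sub_two_mul_card_mul_le_of_le_expect {X : Type*} [Fintype X] [Nonempty X] {f : X → ℝ}
    {c g : ℝ} (hg : 0 ≤ g) (hf : ∀ x, f x ≤ c + g) (h : c - g ≤ 𝔼 x, f x) (x : X) :
    c - 2 * Fintype.card X * g ≤ f x := by
  classical
  have hcard : (1 : ℝ) ≤ Fintype.card X := by exact_mod_cast Fintype.card_pos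
  rw [Fintype.expect_eq_sum_div_card, le_div_iff₀ (by linarith),
    ← add_sum_erase _ _ (mem_univ x)] at h
  have hrest : ∑ y ∈ univ.erase x, f y ≤ (Fintype.card X - 1) * (c + g) := by
    refine (sum_le_card_nsmul _ _ _ fun y _ => hf y).trans_eq ?_
    rw [card_erase_of_mem (mem_univ x), nsmul_eq_mul, card_univ, Nat.cast_sub Fintype.card_pos,
      Nat.cast_one]
  nlinarith

/-- No fibre can exceed the critical density by much, so every fibre must nearly attain it. -/
lemma exists_lineFree_fibers_ge {s : ℝ} (hup : ∀ γ > 0, DensityHalesJewettAt α (s + γ))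
    (hlow : ∀ γ > 0, ¬ DensityHalesJewettAt α (s - γ)) [Nonempty α] (κ : Type) [Finite κ]
    {ε : ℝ} (hε : 0 < ε) :
    ∃ (r : ℕ) (A : Set (κ ⊕ Fin r → α)), (¬ ∃ l : Line α (κ ⊕ Fin r), ∀ a, l a ∈ A) ∧
      ∀ x, s - ε ≤ density {y | Sum.elim x y ∈ A} := by
  classical
  have := Fintype.ofFinite κ
  set γ : ℝ := ε / (2 * Fintype.card (κ → α)) with hγ
  have hγ0 : 0 < γ := by positivity
  obtain ⟨n, hn⟩ := hup γ hγ0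
  obtain ⟨r, hr, A, hA, hfree⟩ : ∃ r, n ≤ r ∧ ∃ A : Set (κ ⊕ Fin r → α), s - γ ≤ density A ∧
      ¬ ∃ l : Line α (κ ⊕ Fin r), ∀ a, l a ∈ A := by
    by_contra! hcon
    refine hlow γ hγ0 ⟨Fintype.card κ + n, fun ι _ _ hι A hA => ?_⟩
    obtain ⟨r, hr, ⟨e⟩⟩ := exists_equiv_fin_sum_fin hι
    let e' : ι ≃ κ ⊕ Fin r := e.trans ((Fintype.equivFin κ).symm.sumCongr (Equiv.refl _))
    obtain ⟨l, hl⟩ := hcon r hr {z | z ∘ e' ∈ A} (by rwa [density_comp_arrow_equiv])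
    exact ⟨lineComp (subspaceOfEquiv α e') l, fun a => by simpa [lineComp_apply] using hl a⟩
  refine ⟨r, A, hfree, fun x => ?_⟩
  have hfiber (x : κ → α) : density {y | Sum.elim x y ∈ A} ≤ s + γ := by
    by_contra! hlt
    obtain ⟨l, hl⟩ := hn (Fin r) (by simpa using hr) _ hlt.le
    exact hfree ⟨l.vertical x, fun a => by simpa using hl a⟩
  have hx := sub_two_mul_card_mul_le_of_le_expect hγ0.le hfiber
    (hA.trans_eq (density_sum_arrow A)) x
  have : 2 * (Fintype.card (κ → α) : ℝ) * γ = ε := by rw [hγ]; field_simp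
  linarith

end CriticalDensity

section ExtendWord
variable {α : Type} {M : ℕ} {κ : Type*}

/-- The word `v` followed by a word over `α ⊕ Fin M`, in which a letter of `Fin M` stands for the
corresponding letter of `v`. -/
def extendWord (v : Fin M → Option α) (c : κ → α ⊕ Fin M) : Fin M ⊕ κ → Option α :=
  Sum.elim v (Sum.elim some v ∘ c)

lemma collapse_extendWord (a : α) (l : Line α (Fin M)) (c : κ → α ⊕ Fin M) :
    collapse a (extendWord l.idxFun c) = extendWord (some ∘ l a) c := by
  ext1 (i | t)
  · rfl
  · rcases h : c t <;> simp [extendWord, collapse, Line.coe_apply, h]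

lemma subspaceVertical_subspaceMap_eq_extendWord {T : Type*} {v : Fin M → Option α} {j : Fin M}
    (hj : v j = none) (l : Subspace T (α ⊕ Fin M) κ) (z : T → Option α) :
    subspaceVertical v (subspaceMap (Sum.elim some v) l) z =
      extendWord v (l ((Option.elim · (Sum.inr j) Sum.inl) ∘ z)) := by
  have hz : Sum.elim some v ∘ (Option.elim · (Sum.inr j) Sum.inl) ∘ z = z := by
    ext1 t
    rcases h : z t <;> simp [h, hj]
  rw [subspaceVertical_apply, extendWord, ← subspaceMap_apply_comp, hz]

variable [Fintype α] [Nonempty α]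

lemma exists_line_le_expect_density {s : ℝ} (hs : 0 < s)
    (hM : ∀ A : Set (Fin M → α), s / 2 ≤ density A → ∃ l : Line α (Fin M), ∀ a, l a ∈ A)
    {μ : Type} [Fintype μ] [DecidableEq μ] [Fintype κ] [DecidableEq κ]
    {A : Set ((Fin M ⊕ κ) ⊕ μ → Option α)} (hA : ∀ x, s ≤ density {y | Sum.elim x y ∈ A}) :
    ∃ l : Line α (Fin M), s / 2 / Nat.card (Line α (Fin M)) ≤
      𝔼 c : κ → α ⊕ Fin M, density {y | ∀ a, Sum.elim (extendWord (some ∘ l a) c) y ∈ A} := by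
  let f (p : (κ → α ⊕ Fin M) × (μ → Option α)) : ℝ :=
    density {x : Fin M → α | Sum.elim (extendWord (some ∘ x) p.1) p.2 ∈ A}
  have hf : s ≤ 𝔼 p, f p := by
    rw [expect_prod_type]
    refine le_expect univ_nonempty fun c _ => ?_
    simp only [f, density]
    rw [expect_comm]
    exact le_expect univ_nonempty fun x _ => hA _
  obtain ⟨l, hl⟩ := exists_div_card_le_density_inter
    (fun l : Line α (Fin M) => {p : (κ → α ⊕ Fin M) × (μ → Option α) |
      ∀ a, Sum.elim (extendWord (some ∘ l a) p.1) p.2 ∈ A}) (A := {p | s / 2 ≤ f p})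
    (fun p hp => hM _ hp) (by positivity)
    (half_le_density_of_le_expect (fun p => density_le_one _) hs.le hf)
  refine ⟨l, (hl.trans (density_mono Set.inter_subset_right)).trans_eq ?_⟩
  rw [density, expect_prod_type]
  rfl

/-- A subspace of prefixes, each containing the letter `none`, such that for many pairs of a
prefix in the subspace and a suffix all the words obtained by collapsing the prefix lie in `A`. -/
lemma DensityHalesJewett.exists_subspace_le_expect_density (h : DensityHalesJewett α) {s : ℝ}
    (hs : 0 < s) (hs1 : s ≤ 1) : ∃ (M : ℕ) (θ : ℝ), 0 < θ ∧ θ ≤ 1 ∧ ∀ m : ℕ, ∃ n : ℕ,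
      ∀ (μ : Type) [Fintype μ] [DecidableEq μ] (A : Set ((Fin M ⊕ Fin n) ⊕ μ → Option α)),
      (∀ x, s ≤ density {y | Sum.elim x y ∈ A}) →
      ∃ (T : Type) (_ : Fintype T) (_ : DecidableEq T)
        (U : Subspace T (Option α) (Fin M ⊕ Fin n)), m ≤ Fintype.card T ∧
        (∃ i, ∀ z, U z i = none) ∧
        θ ≤ 𝔼 z, density {y | ∀ a, Sum.elim (collapse a (U z)) y ∈ A} := by
  obtain ⟨M, hM⟩ := h (s / 2) (by positivity)
  replace hM := hM (Fin M) (by simp)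
  have : Nonempty (Line α (Fin M)) := ⟨(hM Set.univ (by rw [density_univ]; linarith)).choose⟩
  set θ : ℝ := s / 2 / Nat.card (Line α (Fin M))
  have hcard : (1 : ℝ) ≤ Nat.card (Line α (Fin M)) := by exact_mod_cast Nat.card_pos
  have hθ0 : 0 < θ := by positivity
  have hθ1 : θ ≤ s / 2 := div_le_self (by positivity) hcard
  refine ⟨M, θ / 2, by positivity, by linarith, fun m => ?_⟩
  have hinj (j : Fin M) : Function.Injective
      (Option.elim · (Sum.inr j) Sum.inl : Option α → α ⊕ Fin M) := by
    rintro (_ | a) (_ | b) <;> simp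
  choose n hn using fun j => exists_subspace_half_le_expect (hinj j) m hθ0
  refine ⟨univ.sup n, fun μ _ _ A hA => ?_⟩
  obtain ⟨l, hl⟩ := exists_line_le_expect_density hs hM hA
  obtain ⟨j, hj⟩ := l.proper
  obtain ⟨T, _, _, l', hT, hl'⟩ := hn j (Fin (univ.sup n))
    (by simpa using le_sup (f := n) (mem_univ j)) _ (fun c => density_le_one _) hl
  refine ⟨T, inferInstance, inferInstance,
    subspaceVertical l.idxFun (subspaceMap (Sum.elim some l.idxFun) l'), hT,
    ⟨Sum.inl j, fun z => by simp [hj]⟩, ?_⟩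
  simpa only [subspaceVertical_subspaceMap_eq_extendWord hj, collapse_extendWord] using hl'

end ExtendWord

section AlphabetStep

lemma HasPacking.density_le {B ι : Type} [Fintype B] [Nonempty B] [Fintype ι] [DecidableEq ι]
    {m : ℕ} {P : Subspace (Fin m) B ι → Prop} {ε c : ℝ} (h : HasPacking P Set.univ (1 - ε))
    (hc : 0 ≤ c) {E D : Set (ι → B)}
    (hED : ∀ l, P l → density {x | l x ∈ E} ≤ c * (1 - density {x | l x ∈ D})) :
    density E ≤ c * (1 - density D) + ε := by
  obtain ⟨J, _, w, l, hw, hl, hf, hmass⟩ := h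
  have hcompl (F : Set (ι → B)) : ∑ j, w j * (1 - density {x | l j x ∈ F}) ≤ 1 - density F := by
    have hF := hf (Fᶜ.indicator 1) fun z => Set.indicator_nonneg (fun _ _ => zero_le_one) z
    rw [Set.indicator_univ] at hF
    calc _ = ∑ j, w j * 𝔼 x, Fᶜ.indicator (1 : (ι → B) → ℝ) (l j x) := by
          refine sum_congr rfl fun j _ => ?_
          rw [← density_compl]
          rfl
      _ ≤ _ := hF
      _ = 1 - density F := density_compl F
  have hlocal : ∑ j, w j * density {x | l j x ∈ E} ≤
      c * ∑ j, w j * (1 - density {x | l j x ∈ D}) := by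
    rw [mul_sum]
    refine sum_le_sum fun j _ => ?_
    linarith [mul_le_mul_of_nonneg_left (hED _ (hl j)) (hw j)]
  have hE := hcompl E
  simp only [mul_sub, mul_one, sum_sub_distrib] at hE
  linarith [mul_le_mul_of_nonneg_left (hcompl D) hc]

variable {α : Type}

lemma exists_line_of_collapse_mem {ι : Type} {A : Set (ι → Option α)} {w : ι → Option α} {i : ι}
    (hi : w i = none) (hw : w ∈ A) (hc : ∀ a, collapse a w ∈ A) :
    ∃ l : Line (Option α) ι, ∀ b, l b ∈ A := by
  refine ⟨⟨fun i => (w i).map some, ⟨i, by simp [hi]⟩⟩, fun b => ?_⟩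
  cases b with
  | none =>
    convert hw using 1
    ext1 i
    cases h : w i <;> simp [Line.coe_apply, h]
  | some a =>
    convert hc a using 1
    ext1 i
    cases h : w i <;> simp [Line.coe_apply, collapse, h]

variable [Fintype α]

/-- `D` is the set of the words all of whose collapses lie in the line-free set `A`. On a subspace
where the sets of words with a given collapse in `A` are trivial, either `D` is everything and then
`A` is empty, or `D` is empty and then `A` has at most the critical density. -/
lemma density_le_of_isMono_collapse {T κ : Type} {m : ℕ} {A : Set (κ → Option α)} {c : ℝ}
    (hc : 0 ≤ c) (hfree : ¬ ∃ l : Line (Option α) κ, ∀ b, l b ∈ A)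
    (hm : ∀ E : Set (Fin m → Option α), c ≤ density E →
      ∃ l : Line (Option α) (Fin m), ∀ b, l b ∈ E)
    {U : Subspace T (Option α) κ} {i : κ} (hi : ∀ z, U z i = none)
    {l : Subspace (Fin m) (Option α) T}
    (hl : ∀ a, l.IsMono (· ∈ {z | collapse a (U z) ∈ A})) :
    density {x | U (l x) ∈ A} ≤ c * (1 - density {x | ∀ a, collapse a (U (l x)) ∈ A}) := by
  by_cases hall : ∀ a x, collapse a (U (l x)) ∈ A
  · have hempty : {x | U (l x) ∈ A} = ∅ := Set.eq_empty_iff_forall_notMem.mpr fun x hx =>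
      hfree (exists_line_of_collapse_mem (hi (l x)) hx fun a => hall a x)
    rw [hempty, density_empty]
    exact mul_nonneg hc (sub_nonneg.mpr (density_le_one _))
  · push Not at hall
    obtain ⟨a, x, hax⟩ := hall
    obtain ⟨p, hp⟩ := hl a
    have hempty : {x | ∀ a, collapse a (U (l x)) ∈ A} = ∅ :=
      Set.eq_empty_iff_forall_notMem.mpr fun x' hx' =>
        hax (show l x ∈ {z | collapse a (U z) ∈ A} from ((hp x).trans (hp x').symm).mpr (hx' a))
    rw [hempty, density_empty, sub_zero, mul_one]
    by_contra! hlt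
    obtain ⟨k, hk⟩ := hm _ hlt.le
    exact hfree ⟨lineComp (subspaceComp U l) k, fun b => by simpa [lineComp_apply] using hk b⟩

/-- Density increment at the critical density. -/
lemma DensityHalesJewett.option [Nonempty α] (h : DensityHalesJewett α) :
    DensityHalesJewett (Option α) := by
  by_contra hneg
  obtain ⟨s, hs0, hs1, hup, hlow⟩ := exists_critical_density hneg
  obtain ⟨M, θ, hθ0, hθ1, hθ⟩ :=
    h.exists_subspace_le_expect_density (half_pos hs0) (by linarith)
  set ε := s * θ / 4 with hε
  have hε0 : 0 < ε := by positivity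
  have hεs : ε ≤ s / 4 := by rw [hε]; nlinarith
  obtain ⟨m, hm⟩ := hup ε hε0
  obtain ⟨m', hm'⟩ := h.exists_packing_forall_isMono univ m hε0 (by linarith)
  obtain ⟨n, hn⟩ := hθ m'
  obtain ⟨r, A, hfree, hfib⟩ := exists_lineFree_fibers_ge hup hlow (Fin M ⊕ Fin n) hε0
  obtain ⟨T, _, _, U, hT, ⟨i, hi⟩, hU⟩ := hn (Fin r) A fun x => by linarith [hfib x]
  let B (y : Fin r → Option α) : Set (T → Option α) := {z | Sum.elim (U z) y ∈ A}
  let D (y : Fin r → Option α) : Set (T → Option α) :=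
    {z | ∀ a, Sum.elim (collapse a (U z)) y ∈ A}
  have hD : θ ≤ 𝔼 y, density (D y) := hU.trans_eq (expect_comm _ _ _)
  have hB : s - ε ≤ 𝔼 y, density (B y) :=
    (le_expect univ_nonempty fun z _ => hfib (U z)).trans_eq (expect_comm _ _ _)
  obtain ⟨y, -, hy⟩ : ∃ y ∈ univ, s - ε + (s + ε) * θ ≤
      density (B y) + (s + ε) * density (D y) := by
    refine exists_le_of_le_expect univ_nonempty ?_
    rw [expect_add_distrib, ← mul_expect]
    linarith [mul_le_mul_of_nonneg_left hD (show 0 ≤ s + ε by linarith)]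
  have hpack := hm' T hT (fun a => {z | Sum.elim (collapse a (U z)) y ∈ A}) fun a z => by
    simp only [Set.mem_ofPred_eq, collapse_subspace_collapse]
  have hdens := hpack.density_le (c := s + ε) (E := B y) (D := D y) (by linarith) fun l hl =>
    density_le_of_isMono_collapse (A := {x | Sum.elim x y ∈ A}) (by linarith)
      (fun ⟨k, hk⟩ => hfree ⟨k.horizontal y, fun b => by simpa using hk b⟩)
      (fun E hE => hm (Fin m) (by simp) E hE) hi fun a => hl a (mem_univ a)
  nlinarith

end AlphabetStep

lemma densityHalesJewett_of_unique (α : Type) [Fintype α] [Unique α] : DensityHalesJewett α := by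
  refine fun δ hδ => ⟨1, fun ι _ _ hι A hA => ?_⟩
  obtain ⟨a, ha⟩ := nonempty_of_density_pos (hδ.trans_le hA)
  have : Nonempty ι := Fintype.card_pos_iff.mp hι
  exact ⟨Line.diagonal α ι, fun b => by rwa [Subsingleton.elim (Line.diagonal α ι b) a]⟩

lemma DensityHalesJewett.of_equiv {α β : Type} [Fintype α] [Fintype β] (e : α ≃ β)
    (h : DensityHalesJewett α) : DensityHalesJewett β := by
  intro δ hδ
  obtain ⟨n, hn⟩ := h δ hδ
  refine ⟨n, fun ι _ _ hι A hA => ?_⟩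
  obtain ⟨l, hl⟩ := hn ι hι {x | e ∘ x ∈ A}
    (hA.trans_eq (density_comp_equiv ((Equiv.refl ι).arrowCongr e) A).symm)
  refine ⟨l.map e, fun b => ?_⟩
  rw [← e.apply_symm_apply b, Line.map_apply]
  exact hl (e.symm b)

theorem density_hales_jewett (k : ℕ) : DensityHalesJewett (Fin (k + 1)) := by
  induction k with
  | zero => exact densityHalesJewett_of_unique (Fin 1)
  | succ k ih => exact ih.option.of_equiv (finSuccEquiv (k + 1)).symm

/-! ### Szemerédi's theorem with multiplicity -/

section AffineWords
variable {G ι : Type*} [AddCommGroup G] [Fintype ι] {K : ℕ}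

lemma expect_comp_addMonoidHom {H : Type*} [AddCommGroup H] [Fintype G] [Fintype H] (φ : H →+ G)
    (hφ : Function.Surjective φ) (F : G → ℝ) : 𝔼 h, F (φ h) = 𝔼 g, F g := by
  have shift (g : G) : 𝔼 h, F (φ h + g) = 𝔼 h, F (φ h) := by
    obtain ⟨h₀, rfl⟩ := hφ g
    exact Fintype.expect_equiv (Equiv.addRight h₀) _ _ fun h => by simp
  calc 𝔼 h, F (φ h) = 𝔼 g : G, 𝔼 h, F (φ h + g) := by simp only [shift, Fintype.expect_const]
    _ = 𝔼 h : H, 𝔼 g, F (φ h + g) := expect_comm ..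
    _ = 𝔼 _h : H, 𝔼 g, F g :=
        expect_congr rfl fun h _ => Fintype.expect_equiv (Equiv.addLeft (φ h)) _ _ fun _ => rfl
    _ = 𝔼 g, F g := Fintype.expect_const _

/-- The affine image `x + ∑ i, w i • d i` of a word `w`, where `p = (x, d)`. -/
def affineWord (w : ι → Fin K) : G × (ι → G) →+ G where
  toFun p := p.1 + ∑ i, (w i : ℕ) • p.2 i
  map_zero' := by simp
  map_add' p q := by
    simp only [Prod.fst_add, Prod.snd_add, Pi.add_apply, smul_add, sum_add_distrib]
    abel

/-- The base point and the common difference of the progression to which the affine map `p` sends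
the combinatorial line `l`. -/
def lineProgression (l : Line (Fin K) ι) : G × (ι → G) →+ G × G where
  toFun p := (p.1 + ∑ i, ((l.idxFun i).elim 0 fun a => (a : ℕ)) • p.2 i,
    ∑ i, (if l.idxFun i = none then 1 else 0 : ℕ) • p.2 i)
  map_zero' := by simp
  map_add' p q := by
    ext
    · simp only [Prod.fst_add, Prod.snd_add, Pi.add_apply, smul_add, sum_add_distrib]
      abel
    · simp only [Prod.snd_add, Pi.add_apply, smul_add, sum_add_distrib]

lemma affineWord_surjective (w : ι → Fin K) :
    Function.Surjective (affineWord w : G × (ι → G) →+ G) :=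
  fun x => ⟨(x, 0), by simp [affineWord]⟩

lemma lineProgression_surjective (l : Line (Fin K) ι) :
    Function.Surjective (lineProgression l : G × (ι → G) →+ G × G) := by
  classical
  rintro ⟨x, d⟩
  obtain ⟨i₀, h₀⟩ := l.proper
  refine ⟨(x, Pi.single i₀ d), Prod.ext ?_ ?_⟩
  · simp only [lineProgression, AddMonoidHom.coe_mk, ZeroHom.coe_mk, add_eq_left]
    rw [sum_eq_single i₀ (fun i _ hi => by simp [hi]) (by simp)]
    simp [h₀]
  · simp only [lineProgression, AddMonoidHom.coe_mk, ZeroHom.coe_mk]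
    rw [sum_eq_single i₀ (fun i _ hi => by simp [hi]) (by simp)]
    simp [h₀]

lemma affineWord_line (l : Line (Fin K) ι) (p : G × (ι → G)) (a : Fin K) :
    affineWord (l a) p = (lineProgression l p).1 + (a : ℕ) • (lineProgression l p).2 := by
  simp only [affineWord, lineProgression, AddMonoidHom.coe_mk, ZeroHom.coe_mk]
  rw [add_assoc, smul_sum, ← sum_add_distrib]
  congr 1
  refine sum_congr rfl fun i _ => ?_
  rw [Line.coe_apply]
  cases l.idxFun i <;> simp

end AffineWords

lemma exists_progression_density_le (K : ℕ) {δ : ℝ} (hδ : 0 < δ) :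
    ∃ c : ℝ, 0 < c ∧ ∀ (G : Type) [AddCommGroup G] [Fintype G] (A : Set G), δ ≤ density A →
      c ≤ density {p : G × G | ∀ j : Fin (K + 1), p.1 + (j : ℕ) • p.2 ∈ A} := by
  classical
  obtain ⟨n, hn⟩ := density_hales_jewett K (δ / 2) (by positivity)
  refine ⟨δ / 2 / (Nat.card (Line (Fin (K + 1)) (Fin n)) + 1), by positivity,
    fun G _ _ A hA => ?_⟩
  let B (l : Line (Fin (K + 1)) (Fin n)) : Set (G × (Fin n → G)) :=
    {p | ∀ a, affineWord (l a) p ∈ A}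
  have preimage_density : δ ≤ 𝔼 p : G × (Fin n → G),
      density {w : Fin n → Fin (K + 1) | affineWord w p ∈ A} := by
    unfold density
    rw [expect_comm]
    exact le_expect univ_nonempty fun w _ =>
      hA.trans_eq (expect_comp_addMonoidHom _ (affineWord_surjective w) _).symm
  obtain ⟨l, hl⟩ := exists_div_card_le_density_inter B
    (fun p hp => hn (Fin n) (by simp) {w | affineWord w p ∈ A} hp) (by positivity)
    (half_le_density_of_le_expect (fun _ => density_le_one _) hδ.le preimage_density)
  calc δ / 2 / (Nat.card (Line (Fin (K + 1)) (Fin n)) + 1)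
      ≤ δ / 2 / Nat.card (Line (Fin (K + 1)) (Fin n)) := by
        have : Nonempty (Line (Fin (K + 1)) (Fin n)) := ⟨l⟩
        have : (0 : ℝ) < Nat.card (Line (Fin (K + 1)) (Fin n)) := by exact_mod_cast Nat.card_pos
        gcongr
        linarith
    _ ≤ density (B l) := hl.trans (density_mono Set.inter_subset_right)
    _ = density {p : G × G | ∀ j : Fin (K + 1), p.1 + (j : ℕ) • p.2 ∈ A} := by
        simp only [B, affineWord_line]
        exact expect_comp_addMonoidHom _ (lineProgression_surjective l)
          ({p : G × G | ∀ j : Fin (K + 1), p.1 + (j : ℕ) • p.2 ∈ A}.indicator 1)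

/-- Szemerédi's theorem in functional form: counting progressions with multiplicity makes the bound
uniform over all finite abelian groups. -/
theorem exists_le_expect_prod_progression (K : ℕ) {δ : ℝ} (hδ : 0 < δ) :
    ∃ c : ℝ, 0 < c ∧ ∀ (G : Type) [AddCommGroup G] [Fintype G] (g : G → ℝ),
      (∀ x, 0 ≤ g x) → (∀ x, g x ≤ 1) → δ ≤ 𝔼 x, g x →
      c ≤ 𝔼 p : G × G, ∏ j : Fin (K + 1), g (p.1 + (j : ℕ) • p.2) := by
  obtain ⟨c, hc, progression_density⟩ := exists_progression_density_le K (half_pos hδ)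
  refine ⟨(δ / 2) ^ (K + 1) * c, by positivity, fun G _ _ g g_nonneg g_le hg => ?_⟩
  let P : Set (G × G) := {p | ∀ j : Fin (K + 1), p.1 + (j : ℕ) • p.2 ∈ {x | δ / 2 ≤ g x}}
  have hP : c ≤ density P :=
    progression_density G _ (half_le_density_of_le_expect g_le hδ.le hg)
  refine (mul_le_mul_of_nonneg_left hP (by positivity)).trans ?_
  rw [density, mul_expect]
  refine expect_le_expect fun p _ => ?_
  by_cases hp : p ∈ P
  · rw [Set.indicator_of_mem hp, Pi.one_apply, mul_one]
    simpa only [prod_const, card_univ, Fintype.card_fin] using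
      prod_le_prod (s := univ) (fun _ _ => (half_pos hδ).le) fun j _ => hp j
  · rw [Set.indicator_of_notMem hp, mul_zero]
    exact prod_nonneg fun j _ => g_nonneg _

/-! ### The Cauchy–Schwarz inequality on cubes -/

section WeightedCauchySchwarz
variable {Y A : Type*} [Fintype Y] [Fintype A]

lemma sq_expect_mul_le {B W h : Y → ℝ} (hBW : ∀ y, |B y| ≤ W y) :
    (𝔼 y, B y * h y) ^ 2 ≤ (𝔼 y, W y) * 𝔼 y, W y * h y ^ 2 := by
  have hW y : 0 ≤ W y := (abs_nonneg _).trans (hBW y)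
  calc (𝔼 y, B y * h y) ^ 2 ≤ (𝔼 y, √(W y) * (√(W y) * |h y|)) ^ 2 := by
        refine sq_le_sq' (neg_le_of_abs_le ?_) ((le_abs_self _).trans ?_) <;>
        · refine (abs_expect_le _ _).trans (expect_le_expect fun y _ => ?_)
          rw [abs_mul, ← mul_assoc, Real.mul_self_sqrt (hW y)]
          exact mul_le_mul_of_nonneg_right (hBW y) (abs_nonneg _)
    _ ≤ (𝔼 y, √(W y) ^ 2) * 𝔼 y, (√(W y) * |h y|) ^ 2 := expect_mul_sq_le_sq_mul_sq _ _ _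
    _ = _ := by simp only [mul_pow, sq_abs, Real.sq_sqrt (hW _)]

lemma sq_expect_mul_expect_le {B W : Y → ℝ} (hBW : ∀ y, |B y| ≤ W y) (R : Y → A → ℝ) :
    (𝔼 y, B y * 𝔼 a, R y a) ^ 2 ≤ (𝔼 y, W y) * 𝔼 y, W y * 𝔼 a, 𝔼 a', R y a * R y a' := by
  refine (sq_expect_mul_le hBW).trans_eq ?_
  simp only [sq, expect_mul_expect]

end WeightedCauchySchwarz

section Cube
variable {ι X : Type*} [DecidableEq ι]

/-- Exchange the two components of `p` at the coordinates in `t`. -/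
def swapOn (t : Finset ι) (p : ι → X × X) : ι → X × X :=
  fun i => if i ∈ t then (p i).swap else p i

/-- The vertex of the cube spanned by `p` at which the coordinates in `t` take their second
value. -/
def vertex (t : Finset ι) (p : ι → X × X) : ι → X :=
  fun i => if i ∈ t then (p i).2 else (p i).1

/-- The product of `f` over the `2 ^ #s` configurations obtained from `p` by exchanging
components at coordinates in `s`. -/
def cubeProd (s : Finset ι) (f : (ι → X × X) → ℝ) (p : ι → X × X) : ℝ :=
  ∏ t ∈ s.powerset, f (swapOn t p)

/-- `f p` does not involve the second component of `p i`. -/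
def IgnoresSnd (i : ι) (f : (ι → X × X) → ℝ) : Prop :=
  ∀ p a b c, f (Function.update p i (a, b)) = f (Function.update p i (a, c))

omit [DecidableEq ι] in
lemma dependsOn_mul {Y : Type*} {s : Set ι} {f g : (ι → Y) → ℝ} (hf : DependsOn f s)
    (hg : DependsOn g s) : DependsOn (fun x => f x * g x) s :=
  fun _ _ h => congrArg₂ (· * ·) (hf h) (hg h)

lemma update_of_dependsOn_compl {Y : Type*} {i : ι} {f : (ι → Y) → ℝ} (hf : DependsOn f {i}ᶜ)
    (x : ι → Y) (a : Y) : f (Function.update x i a) = f x :=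
  hf fun _ h => Function.update_of_ne h ..

lemma swapOn_empty (p : ι → X × X) : swapOn ∅ p = p := by
  ext1
  simp [swapOn]

lemma swapOn_update {t : Finset ι} {i : ι} (hi : i ∉ t) (p : ι → X × X) (v : X × X) :
    swapOn t (Function.update p i v) = Function.update (swapOn t p) i v := by
  ext1 i'
  obtain rfl | h := eq_or_ne i' i
  · simp [swapOn, hi]
  · simp [swapOn, h]

lemma swapOn_singleton (i : ι) (p : ι → X × X) :
    swapOn {i} p = Function.update p i (p i).swap := by
  ext1 i'
  obtain rfl | h := eq_or_ne i' i
  · simp [swapOn]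
  · simp [swapOn, h]

lemma swapOn_insert {t : Finset ι} {i : ι} (hi : i ∉ t) (p : ι → X × X) :
    swapOn (insert i t) p = swapOn t (swapOn {i} p) := by
  ext1 i'
  obtain rfl | h := eq_or_ne i' i
  · simp [swapOn, hi]
  · simp [swapOn, h]

lemma vertex_swapOn {t u : Finset ι} (h : Disjoint t u) (p : ι → X × X) :
    vertex u (swapOn t p) = vertex (t ∪ u) p := by
  ext1 i
  have := @Finset.disjoint_left _ t u
  by_cases ht : i ∈ t <;> by_cases hu : i ∈ u <;> simp_all [vertex, swapOn]

lemma vertex_update_of_mem_compl {t : Finset ι} {i : ι} (hi : i ∉ t) (p : ι → X × X) (a b c : X) :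
    vertex t (Function.update p i (a, b)) = vertex t (Function.update p i (a, c)) := by
  ext1 i'
  obtain rfl | h := eq_or_ne i' i
  · simp [vertex, hi]
  · simp [vertex, h]

lemma dependsOn_comp_vertex {i : ι} {f : (ι → X) → ℝ} (hf : DependsOn f {i}ᶜ) (t : Finset ι) :
    DependsOn (fun p => f (vertex t p)) {i}ᶜ :=
  fun _ _ h => hf fun i' hi' => by simp only [vertex, h i' hi']

lemma ignoresSnd_comp_vertex {t : Finset ι} {i : ι} (hi : i ∉ t) (f : (ι → X) → ℝ) :
    IgnoresSnd i fun p => f (vertex t p) :=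
  fun p a b c => congrArg f (vertex_update_of_mem_compl hi p a b c)

lemma IgnoresSnd.mul {i : ι} {f g : (ι → X × X) → ℝ} (hf : IgnoresSnd i f) (hg : IgnoresSnd i g) :
    IgnoresSnd i fun p => f p * g p :=
  fun p a b c => congrArg₂ (· * ·) (hf p a b c) (hg p a b c)

lemma IgnoresSnd.prod {κ : Type*} {i : ι} {s : Finset κ} {f : κ → (ι → X × X) → ℝ}
    (hf : ∀ k ∈ s, IgnoresSnd i (f k)) : IgnoresSnd i fun p => ∏ k ∈ s, f k p :=
  fun p a b c => prod_congr rfl fun k hk => hf k hk p a b c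

lemma IgnoresSnd.cubeProd {s : Finset ι} {i : ι} (hi : i ∉ s) {f : (ι → X × X) → ℝ}
    (hf : IgnoresSnd i f) : IgnoresSnd i (cubeProd s f) := by
  refine IgnoresSnd.prod fun t ht p a b c => ?_
  have hit : i ∉ t := fun h => hi (mem_powerset.mp ht h)
  simp only [swapOn_update hit, hf _ a b c]

lemma dependsOn_cubeProd {i : ι} {f : (ι → X × X) → ℝ} (hf : DependsOn f {i}ᶜ) (s : Finset ι) :
    DependsOn (cubeProd s f) {i}ᶜ :=
  fun _ _ h => prod_congr rfl fun t _ => hf fun i' hi' => by simp only [swapOn, h i' hi']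

lemma cubeProd_insert {s : Finset ι} {i : ι} (hi : i ∉ s) (f : (ι → X × X) → ℝ) (p : ι → X × X) :
    cubeProd (insert i s) f p = cubeProd s f p * cubeProd s f (swapOn {i} p) := by
  rw [cubeProd, prod_powerset_insert hi]
  congr 1
  exact prod_congr rfl fun t ht => by rw [swapOn_insert fun h => hi (mem_powerset.mp ht h)]

lemma abs_cubeProd_le {f g : (ι → X × X) → ℝ} (h : ∀ p, |f p| ≤ g p) (s : Finset ι)
    (p : ι → X × X) : |cubeProd s f p| ≤ cubeProd s g p := by
  rw [cubeProd, abs_prod]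
  exact prod_le_prod (fun _ _ => abs_nonneg _) fun _ _ => h _

/-- The integrand left by the iterated Cauchy–Schwarz inequality after doubling the coordinates in
`s`: the factors `b i` with `i ∈ s` have been replaced by their majorants `w i`. -/
def mixedProd (I s : Finset ι) (r : (ι → X × X) → ℝ) (b w : ι → (ι → X × X) → ℝ)
    (p : ι → X × X) : ℝ :=
  cubeProd s r p * (∏ i ∈ s, cubeProd (s.erase i) (w i) p) * ∏ i ∈ I \ s, cubeProd s (b i) p

variable {I s : Finset ι} {i : ι} {r : (ι → X × X) → ℝ} {b w : ι → (ι → X × X) → ℝ}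

lemma mixedProd_eq_mul (hiI : i ∈ I) (hi : i ∉ s) (p : ι → X × X) :
    mixedProd I s r b w p = cubeProd s (b i) p * mixedProd (I.erase i) s r b w p := by
  rw [mixedProd, mixedProd, ← mul_prod_erase (I \ s) _ (mem_sdiff.mpr ⟨hiI, hi⟩),
    erase_sdiff_comm]
  ring

lemma ignoresSnd_mixedProd (hi : i ∉ s) (hr : IgnoresSnd i r) (hw : ∀ j ∈ s, IgnoresSnd i (w j))
    (hb : ∀ j ∈ I, IgnoresSnd i (b j)) : IgnoresSnd i (mixedProd I s r b w) :=
  ((hr.cubeProd hi).mul (.prod fun j h => (hw j h).cubeProd (mt mem_of_mem_erase hi))).mul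
    (.prod fun j h => (hb j (mem_sdiff.mp h).1).cubeProd hi)

lemma mixedProd_mul_swapOn (hi : i ∉ s) (p : ι → X × X) :
    cubeProd s (w i) p *
        (mixedProd (I.erase i) s r b w p * mixedProd (I.erase i) s r b w (swapOn {i} p)) =
      mixedProd I (insert i s) r b w p := by
  have hw_insert : ∏ j ∈ s, cubeProd ((insert i s).erase j) (w j) p =
      (∏ j ∈ s, cubeProd (s.erase j) (w j) p) *
        ∏ j ∈ s, cubeProd (s.erase j) (w j) (swapOn {i} p) := by
    rw [← prod_mul_distrib]
    refine prod_congr rfl fun j hj => ?_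
    rw [erase_insert_of_ne fun h : i = j => hi (h ▸ hj), cubeProd_insert (mt mem_of_mem_erase hi)]
  simp only [mixedProd]
  rw [prod_insert hi, erase_insert hi, hw_insert, erase_sdiff_comm, ← sdiff_insert]
  simp only [cubeProd_insert hi, prod_mul_distrib]
  ring

end Cube

section CubeExpectation
variable {ι X : Type*} [Fintype ι] [DecidableEq ι] [Fintype X] [Nonempty X]

lemma expect_update {Y : Type*} [Fintype Y] [Nonempty Y] (i : ι) (F : (ι → Y) → ℝ) :
    𝔼 p, F p = 𝔼 p, 𝔼 a, F (Function.update p i a) := by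
  let σ : (ι → Y) × Y → (ι → Y) × Y := fun q => (Function.update q.1 i q.2, q.1 i)
  have hσ : Function.Involutive σ := fun ⟨p, a⟩ => by simp [σ]
  calc 𝔼 p, F p = 𝔼 q : (ι → Y) × Y, F q.1 := by
        simp only [expect_prod_type, Fintype.expect_const]
    _ = 𝔼 q : (ι → Y) × Y, F (σ q).1 :=
        (Fintype.expect_equiv hσ.toPerm _ _ fun _ => rfl).symm
    _ = _ := expect_prod_type _

/-- The Cauchy–Schwarz step: a factor not involving the coordinate `i` is replaced by its majorant,
at the cost of doubling that coordinate in the remaining factor. -/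
lemma sq_expect_mul_le_swapOn (i : ι) {B W R : (ι → X × X) → ℝ} (hB : DependsOn B {i}ᶜ)
    (hW : DependsOn W {i}ᶜ) (hBW : ∀ p, |B p| ≤ W p) (hR : IgnoresSnd i R) :
    (𝔼 p, B p * R p) ^ 2 ≤ (𝔼 p, W p) * 𝔼 p, W p * (R p * R (swapOn {i} p)) := by
  let R' (p : ι → X × X) (a : X) : ℝ := R (Function.update p i (a, a))
  have hR' p a b : R (Function.update p i (a, b)) = R' p a := hR p a b a
  have left : 𝔼 p, B p * R p = 𝔼 p, B p * 𝔼 a, R' p a := by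
    rw [expect_update i]
    simp only [update_of_dependsOn_compl hB, expect_prod_type, hR', Fintype.expect_const,
      mul_expect]
  have right : 𝔼 p, W p * (R p * R (swapOn {i} p)) =
      𝔼 p, W p * 𝔼 a, 𝔼 a', R' p a * R' p a' := by
    rw [expect_update i]
    simp only [update_of_dependsOn_compl hW, swapOn_singleton, Function.update_self,
      Function.update_idem, expect_prod_type, Prod.swap_prod_mk, hR', mul_expect]
  rw [left, right]
  exact sq_expect_mul_expect_le hBW R'

theorem two_mul_abs_expect_pow_le {I s : Finset ι} (hs : s ⊆ I) {r : (ι → X × X) → ℝ}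
    {b w : ι → (ι → X × X) → ℝ} (hr : ∀ i ∈ I, IgnoresSnd i r)
    (hb : ∀ i ∈ I, DependsOn (b i) {i}ᶜ) (hw : ∀ i ∈ I, DependsOn (w i) {i}ᶜ)
    (hb' : ∀ i ∈ I, ∀ i' ∈ I, IgnoresSnd i (b i')) (hw' : ∀ i ∈ I, ∀ i' ∈ I, IgnoresSnd i (w i'))
    (hbw : ∀ i ∈ I, ∀ p, |b i p| ≤ w i p)
    (hwE : ∀ i ∈ I, ∀ t ⊆ I.erase i, 𝔼 p, cubeProd t (w i) p ≤ 2) :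
    2 * |𝔼 p, r p * ∏ i ∈ I, b i p| ^ 2 ^ #s ≤ 2 ^ 2 ^ #s * |𝔼 p, mixedProd I s r b w p| := by
  induction s using Finset.induction_on with
  | empty => simp [mixedProd, cubeProd, swapOn_empty]
  | insert i s hi ih =>
    obtain ⟨hiI, hsI⟩ := insert_subset_iff.mp hs
    have step := sq_expect_mul_le_swapOn i (dependsOn_cubeProd (hb i hiI) s)
      (dependsOn_cubeProd (hw i hiI) s) (abs_cubeProd_le (hbw i hiI) s)
      (ignoresSnd_mixedProd (I := I.erase i) hi (hr i hiI) (fun j hj => hw' i hiI j (hsI hj))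
        fun j hj => hb' i hiI j (mem_of_mem_erase hj))
    simp only [mixedProd_mul_swapOn hi, ← mixedProd_eq_mul hiI hi] at step
    specialize ih hsI
    set E := |𝔼 p, r p * ∏ i ∈ I, b i p|
    set Z := 𝔼 p, mixedProd I (insert i s) r b w p
    set Z₀ := 𝔼 p, mixedProd I s r b w p
    have hZ : Z₀ ^ 2 ≤ 2 * |Z| := by
      refine step.trans ((mul_le_mul_of_nonneg_left (le_abs_self Z) ?_).trans
        (mul_le_mul_of_nonneg_right (hwE i hiI s (subset_erase.mpr ⟨hsI, hi⟩)) (abs_nonneg Z)))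
      exact expect_nonneg fun p _ => (abs_nonneg _).trans (abs_cubeProd_le (hbw i hiI) s p)
    rw [card_insert_of_notMem hi, pow_succ 2 #s, pow_mul, pow_mul]
    calc 2 * (E ^ 2 ^ #s) ^ 2 = (2 * E ^ 2 ^ #s) ^ 2 / 2 := by ring
      _ ≤ (2 ^ 2 ^ #s * |Z₀|) ^ 2 / 2 := by gcongr
      _ = ((2 : ℝ) ^ 2 ^ #s) ^ 2 * (Z₀ ^ 2 / 2) := by rw [mul_pow, sq_abs]; ring
      _ ≤ ((2 : ℝ) ^ 2 ^ #s) ^ 2 * |Z| := by gcongr; linarith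

end CubeExpectation

/-! ### Linear forms conditions on product spaces -/

section LinearForms
variable {ι X : Type*} [Fintype ι] [DecidableEq ι] [Fintype X]

/-- The linear forms condition for weights `ν i` on the product space `ι → X`. The vertex `t` of a
cube matters to `ν i` only through `t \ {i}`, because `ν i` will not depend on the coordinate `i`;
hence only the `t` not containing `i` occur. The exponents `n_{i,t} ∈ {0, 1}` are encoded by the
choice `w i t ∈ {ν i, 1}`. -/
def LinearFormsCondition (ν : ι → (ι → X) → ℝ) (η : ℝ) : Prop :=
  ∀ w : ι → Finset ι → (ι → X) → ℝ, (∀ i t, w i t = ν i ∨ w i t = 1) →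
    |(𝔼 p, ∏ i, ∏ t ∈ (univ.erase i).powerset, w i t (vertex t p)) - 1| ≤ η

lemma expect_comp_vertex_pair [Nonempty X] (j : ι) (F : (ι → X) → (ι → X) → ℝ) :
    𝔼 p, F (vertex ∅ p) (vertex {j} p) = 𝔼 x, 𝔼 a, F x (Function.update x j a) := by
  calc 𝔼 p, F (vertex ∅ p) (vertex {j} p)
      = 𝔼 q : (ι → X) × (ι → X), F q.1 (Function.update q.1 j (q.2 j)) := by
        refine Fintype.expect_equiv (Equiv.arrowProdEquivProdArrow ι (fun _ => X) fun _ => X) _ _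
          fun p => ?_
        congr 1
        ext i
        obtain rfl | hi := eq_or_ne i j <;> simp [vertex, *]
    _ = _ := by
        rw [expect_prod_type]
        refine expect_congr rfl fun x _ => ?_
        rw [expect_update j]
        simp only [Function.update_self, Fintype.expect_const]

omit [Fintype ι] [Fintype X] in
lemma cubeProd_vertex_pair {j : ι} {s : Finset ι} (hj : j ∉ s) (f g : (ι → X) → ℝ)
    (p : ι → X × X) :
    cubeProd s (fun p => f (vertex ∅ p) * g (vertex {j} p)) p =
      ∏ t ∈ (insert j s).powerset, (if j ∈ t then g else f) (vertex t p) := by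
  rw [prod_powerset_insert hj, cubeProd, ← prod_mul_distrib]
  refine prod_congr rfl fun t ht => ?_
  have hjt : j ∉ t := fun h => hj (mem_powerset.mp ht h)
  rw [vertex_swapOn (disjoint_empty_right t), vertex_swapOn (disjoint_singleton_right.mpr hjt),
    union_empty, union_comm, ← insert_eq]
  simp [hjt]

variable {ν : ι → (ι → X) → ℝ} {η : ℝ}

namespace LinearFormsCondition

lemma mono {η' : ℝ} (h : LinearFormsCondition ν η) (hη : η ≤ η') : LinearFormsCondition ν η' :=
  fun w hw => (h w hw).trans hη

lemma update_one (h : LinearFormsCondition ν η) (j : ι) :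
    LinearFormsCondition (Function.update ν j 1) η := by
  refine fun w hw => h w fun i t => ?_
  obtain rfl | hi := eq_or_ne i j
  · exact .inr (by simpa using hw i t)
  · simpa [hi] using hw i t

lemma abs_expect_prod_vertex_sub_one_le (h : LinearFormsCondition ν η) {s : Finset ι}
    {T : ι → Finset (Finset ι)} (hT : ∀ i ∈ s, ∀ t ∈ T i, i ∉ t)
    {w : ι → Finset ι → (ι → X) → ℝ} (hw : ∀ i t, w i t = ν i ∨ w i t = 1) :
    |(𝔼 p, ∏ i ∈ s, ∏ t ∈ T i, w i t (vertex t p)) - 1| ≤ η := by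
  let w' (i : ι) (t : Finset ι) : (ι → X) → ℝ := if i ∈ s ∧ t ∈ T i then w i t else 1
  have hw' i t : w' i t = ν i ∨ w' i t = 1 := by
    simp only [w']
    split_ifs
    exacts [hw i t, .inr rfl]
  convert h w' hw' using 3
  refine expect_congr rfl fun p _ => ?_
  rw [← prod_subset (subset_univ s) fun i _ hi => by simp [w', hi]]
  refine prod_congr rfl fun i hi => ?_
  have hTi : T i ⊆ (univ.erase i).powerset := fun t ht =>
    mem_powerset.mpr (subset_erase.mpr ⟨subset_univ t, hT i hi t ht⟩)
  rw [← prod_subset hTi fun t _ ht => by simp [w', ht]]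
  exact prod_congr rfl fun t ht => by simp [w', hi, ht]

/-- Expand each factor `ν j - 1`: the main terms cancel. -/
lemma abs_expect_prod_sub_one_le (h : LinearFormsCondition ν η) (j : ι)
    {w : ι → Finset ι → (ι → X) → ℝ} (hw : ∀ i t, w i t = ν i ∨ w i t = 1) :
    |𝔼 p : ι → X × X, (∏ t ∈ (univ.erase j).powerset, (ν j (vertex t p) - 1)) *
        ∏ i ∈ univ.erase j, ∏ t ∈ (univ.erase i).powerset, w i t (vertex t p)| ≤
      2 ^ 2 ^ (Fintype.card ι - 1) * η := by
  set P := (univ.erase j : Finset ι).powerset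
  let w' (s : Finset (Finset ι)) : ι → Finset ι → (ι → X) → ℝ :=
    Function.update w j fun t => if t ∈ s then 1 else ν j
  let L (s : Finset (Finset ι)) : ℝ :=
    𝔼 p : ι → X × X, ∏ i, ∏ t ∈ (univ.erase i).powerset, w' s i t (vertex t p)
  have hL s : |L s - 1| ≤ η := h _ fun i t => by
    obtain rfl | hi := eq_or_ne i j
    · simp only [w', Function.update_self]
      split_ifs <;> simp
    · simpa [w', hi] using hw i t
  have expand : 𝔼 p : ι → X × X, (∏ t ∈ P, (ν j (vertex t p) - 1)) *
      ∏ i ∈ univ.erase j, ∏ t ∈ (univ.erase i).powerset, w i t (vertex t p) =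
      ∑ s ∈ P.powerset, (-1) ^ #s * L s := by
    simp only [L, mul_expect]
    rw [← expect_sum_comm]
    refine expect_congr rfl fun p _ => ?_
    rw [prod_sub, sum_mul]
    refine sum_congr rfl fun s hs => ?_
    have first : ∏ t ∈ P, w' s j t (vertex t p) = ∏ t ∈ P \ s, ν j (vertex t p) := by
      rw [← prod_sdiff (mem_powerset.mp hs), prod_congr (g := 1) rfl fun t (ht : t ∈ s) => ?_]
      · simp only [Pi.one_apply, prod_const_one, mul_one]
        exact prod_congr rfl fun t ht => by simp [w', (mem_sdiff.mp ht).2]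
      · simp [w', ht]
    have rest : ∏ i ∈ univ.erase j, ∏ t ∈ (univ.erase i).powerset, w' s i t (vertex t p) =
        ∏ i ∈ univ.erase j, ∏ t ∈ (univ.erase i).powerset, w i t (vertex t p) :=
      prod_congr rfl fun i hi => by simp [w', ne_of_mem_erase hi]
    rw [← mul_prod_erase univ _ (mem_univ j), first, rest]
    simp [mul_assoc]
  have alternating : ∑ s ∈ P.powerset, (-1 : ℝ) ^ #s = 0 := by
    exact_mod_cast sum_powerset_neg_one_pow_card_of_nonempty ⟨∅, empty_mem_powerset _⟩
  calc _ = |∑ s ∈ P.powerset, (-1) ^ #s * (L s - 1)| := by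
        rw [expand]
        simp only [mul_sub, mul_one, sum_sub_distrib, alternating, sub_zero]
    _ ≤ ∑ _s ∈ P.powerset, η := by
        refine (abs_sum_le_sum_abs _ _).trans (sum_le_sum fun s _ => ?_)
        rw [abs_mul, abs_neg_one_pow, one_mul]
        exact hL s
    _ = 2 ^ 2 ^ (Fintype.card ι - 1) * η := by simp [P, card_powerset, card_erase_of_mem]

variable {μ μ' : ι → (ι → X) → ℝ} {b b' : ι → (ι → X) → ℝ}

lemma expect_cubeProd_le (h : LinearFormsCondition ν η) (hη : η ≤ 1)
    (hμ : ∀ i, μ i = ν i ∨ μ i = 1) (hμ' : ∀ i, μ' i = ν i ∨ μ' i = 1) {i j : ι} (hij : i ≠ j)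
    {t : Finset ι} (hjt : j ∉ t) (hit : i ∉ t) :
    𝔼 p, cubeProd t (fun p => μ i (vertex ∅ p) * μ' i (vertex {j} p)) p ≤ 2 := by
  have key := h.abs_expect_prod_vertex_sub_one_le (s := {i}) (T := fun _ => (insert j t).powerset)
    (w := fun i u => if j ∈ u then μ' i else μ i) ?_ fun i u => ?_
  · simp only [cubeProd_vertex_pair hjt]
    simp only [prod_singleton] at key
    linarith [(abs_le.mp key).2]
  · simp only [mem_singleton, forall_eq, mem_powerset]
    exact fun u hu hi => (mem_insert.mp (hu hi)).elim hij hit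
  · split_ifs
    exacts [hμ' i, hμ i]

variable [Nonempty X]

lemma expect_le (h : LinearFormsCondition ν η) (j : ι) : 𝔼 x, ν j x ≤ 1 + η := by
  have key := h.abs_expect_prod_vertex_sub_one_le (s := {j}) (T := fun _ => {∅})
    (by simp) (w := fun i _ => ν i) fun _ _ => .inl rfl
  simp only [prod_singleton, expect_comp_vertex_pair j fun x _ => ν j x,
    Fintype.expect_const] at key
  linarith [(abs_le.mp key).2]

/-- One application of the Cauchy–Schwarz inequality for each coordinate other than `j` removes the
functions `b i` and `b' i` and leaves an average of products of the weights. -/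
lemma two_mul_abs_expect_sub_one_mul_pow_le (h : LinearFormsCondition ν η) (hη : η ≤ 1)
    (hν : ∀ i, DependsOn (ν i) {i}ᶜ) (j : ι)
    (hμ : ∀ i, μ i = ν i ∨ μ i = 1) (hμ' : ∀ i, μ' i = ν i ∨ μ' i = 1)
    (hb : ∀ i, DependsOn (b i) {i}ᶜ) (hb' : ∀ i, DependsOn (b' i) {i}ᶜ)
    (hbμ : ∀ i x, |b i x| ≤ μ i x) (hbμ' : ∀ i x, |b' i x| ≤ μ' i x) :
    2 * |𝔼 x, 𝔼 a, (ν j x - 1) * ∏ i ∈ univ.erase j, b i x * b' i (Function.update x j a)| ^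
        2 ^ (Fintype.card ι - 1) ≤
      2 ^ 2 ^ (Fintype.card ι - 1) * (2 ^ 2 ^ (Fintype.card ι - 1) * η) := by
  have hdep {f : ι → (ι → X) → ℝ} (hf : ∀ i, f i = ν i ∨ f i = 1) (i : ι) :
      DependsOn (f i) {i}ᶜ := by
    obtain e | e := hf i <;> rw [e]
    exacts [hν i, fun _ _ _ => rfl]
  have hfst {i : ι} (hi : i ∈ univ.erase j) (f g : (ι → X) → ℝ) :
      IgnoresSnd i fun p => f (vertex ∅ p) * g (vertex {j} p) :=
    (ignoresSnd_comp_vertex (notMem_empty i) f).mul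
      (ignoresSnd_comp_vertex (by simpa using ne_of_mem_erase hi) g)
  rw [← expect_comp_vertex_pair j fun x y => (ν j x - 1) * ∏ i ∈ univ.erase j, b i x * b' i y]
  have key := two_mul_abs_expect_pow_le (subset_refl (univ.erase j))
    (r := fun p => ν j (vertex ∅ p) - 1)
    (b := fun i p => b i (vertex ∅ p) * b' i (vertex {j} p))
    (w := fun i p => μ i (vertex ∅ p) * μ' i (vertex {j} p))
    (fun i _ => ignoresSnd_comp_vertex (notMem_empty i) fun x => ν j x - 1)
    (fun i _ => dependsOn_mul (dependsOn_comp_vertex (hb i) _) (dependsOn_comp_vertex (hb' i) _))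
    (fun i _ => dependsOn_mul (dependsOn_comp_vertex (hdep hμ i) _)
      (dependsOn_comp_vertex (hdep hμ' i) _))
    (fun i hi i' _ => hfst hi _ _) (fun i hi i' _ => hfst hi _ _)
    (fun i _ p => (abs_mul _ _).trans_le (mul_le_mul (hbμ i _) (hbμ' i _) (abs_nonneg _)
      ((abs_nonneg _).trans (hbμ i _))))
    fun i hi t ht => ?_
  · rw [card_erase_of_mem (mem_univ j), card_univ] at key
    refine key.trans (mul_le_mul_of_nonneg_left ?_ (by positivity))
    refine le_of_eq_of_le (congrArg abs (expect_congr rfl fun p _ => ?_))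
      (h.abs_expect_prod_sub_one_le j (w := fun i t => if j ∈ t then μ' i else μ i)
        fun i t => by split_ifs; exacts [hμ' i, hμ i])
    rw [mixedProd, sdiff_self, bot_eq_empty, prod_empty, mul_one]
    congr 1
    · exact prod_congr rfl fun t _ => by
        beta_reduce
        rw [vertex_swapOn (disjoint_empty_right t), union_empty]
    · refine prod_congr rfl fun i hi => ?_
      have hji : j ∈ univ.erase i := mem_erase.mpr ⟨(ne_of_mem_erase hi).symm, mem_univ j⟩
      rw [cubeProd_vertex_pair (by simp), erase_right_comm, insert_erase hji]
  · exact h.expect_cubeProd_le hη hμ hμ' (ne_of_mem_erase hi)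
      (fun hj => ne_of_mem_erase (mem_of_mem_erase (ht hj)) rfl)
      fun hi => ne_of_mem_erase (ht hi) rfl

end LinearFormsCondition

theorem exists_abs_expect_sub_one_mul_le (ι : Type*) [Fintype ι] [DecidableEq ι] {ε : ℝ}
    (hε : 0 < ε) :
    ∃ η : ℝ, 0 < η ∧ ∀ (X : Type) [Fintype X] [Nonempty X] (ν μ μ' b b' : ι → (ι → X) → ℝ),
      LinearFormsCondition ν η → (∀ i, DependsOn (ν i) {i}ᶜ) → (∀ i, μ i = ν i ∨ μ i = 1) →
      (∀ i, μ' i = ν i ∨ μ' i = 1) → (∀ i, DependsOn (b i) {i}ᶜ) →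
      (∀ i, DependsOn (b' i) {i}ᶜ) → (∀ i x, |b i x| ≤ μ i x) → (∀ i x, |b' i x| ≤ μ' i x) → ∀ j,
      |𝔼 x, 𝔼 a, (ν j x - 1) * ∏ i ∈ univ.erase j, b i x * b' i (Function.update x j a)| ≤ ε := by
  set n := 2 ^ (Fintype.card ι - 1)
  set C : ℝ := 2 ^ n * 2 ^ n
  refine ⟨min 1 (2 * ε ^ n / C), by positivity,
    fun X _ _ ν μ μ' b b' h hν hμ hμ' hb hb' hbμ hbμ' j =>
      le_of_pow_le_pow_left₀ (n := n) (by positivity) hε.le ?_⟩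
  have key := h.two_mul_abs_expect_sub_one_mul_pow_le (min_le_left _ _) hν j hμ hμ' hb hb' hbμ hbμ'
  rw [← mul_assoc] at key
  have hC : C * min 1 (2 * ε ^ n / C) ≤ 2 * ε ^ n := by
    rw [← le_div_iff₀' (by positivity)]
    exact min_le_right _ _
  linarith

end LinearForms

/-! ### The relative counting lemma -/

section Counting
variable {ι X : Type*} [Fintype ι] [DecidableEq ι] [Fintype X]

/-- The dual function at `j` of `g`: the average over the coordinate `j` of the product of all
`g i` with `i ≠ j`. -/
noncomputable def dual (j : ι) (g : ι → (ι → X) → ℝ) (x : ι → X) : ℝ :=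
  𝔼 a, ∏ i ∈ univ.erase j, g i (Function.update x j a)

/-- The cut norm of `h` at `j` is at most `ε`: no product of bounded functions, each missing one
coordinate other than `j`, has correlation exceeding `ε` with `h`. -/
def CutNormLE (j : ι) (h : (ι → X) → ℝ) (ε : ℝ) : Prop :=
  ∀ u : ι → (ι → X) → ℝ, (∀ i, DependsOn (u i) {i}ᶜ) → (∀ i x, |u i x| ≤ 1) →
    |𝔼 x, h x * ∏ i ∈ univ.erase j, u i x| ≤ ε

omit [Fintype ι] [DecidableEq ι] [Fintype X] in
/-- `g` is a system of nonnegative functions bounded by `ν`, the `i`-th of which does not involve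
the coordinate `i`. -/
structure Dominated (g ν : ι → (ι → X) → ℝ) : Prop where
  dependsOn : ∀ i, DependsOn (g i) {i}ᶜ
  nonneg : ∀ i x, 0 ≤ g i x
  le : ∀ i x, g i x ≤ ν i x

variable {g g' ν : ι → (ι → X) → ℝ} {j : ι} {η ε τ : ℝ}

lemma CutNormLE.mono {h : (ι → X) → ℝ} {ε' : ℝ} (hh : CutNormLE j h ε) (hε : ε ≤ ε') :
    CutNormLE j h ε' :=
  fun u hu hu1 => (hh u hu hu1).trans hε

namespace Dominated

omit [Fintype ι] [DecidableEq ι] [Fintype X] in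
lemma abs_le (h : Dominated g ν) (i : ι) (x : ι → X) : |g i x| ≤ ν i x :=
  (abs_of_nonneg (h.nonneg i x)).trans_le (h.le i x)

omit [Fintype ι] [Fintype X] in
lemma update (h : Dominated g ν) {c : (ι → X) → ℝ} (hc : DependsOn c {j}ᶜ) (hc0 : ∀ x, 0 ≤ c x)
    (hc1 : ∀ x, c x ≤ 1) : Dominated (Function.update g j c) (Function.update ν j 1) where
  dependsOn i := by
    obtain rfl | hi := eq_or_ne i j
    · simpa
    · simpa [hi] using h.dependsOn i
  nonneg i x := by
    obtain rfl | hi := eq_or_ne i j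
    · simpa using hc0 x
    · simpa [hi] using h.nonneg i x
  le i x := by
    obtain rfl | hi := eq_or_ne i j
    · simpa using hc1 x
    · simpa [hi] using h.le i x

lemma dual_nonneg (h : Dominated g ν) (j : ι) (x : ι → X) : 0 ≤ dual j g x :=
  expect_nonneg fun _ _ => prod_nonneg fun i _ => h.nonneg i _

lemma dual_le (h : Dominated g ν) (j : ι) (x : ι → X) : dual j g x ≤ dual j ν x :=
  expect_le_expect fun _ _ => prod_le_prod (fun i _ => h.nonneg i _) fun i _ => h.le i _

end Dominated

lemma dual_one [Nonempty X] (j : ι) (x : ι → X) : dual j 1 x = 1 := by simp [dual]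

lemma dependsOn_dual (j : ι) (g : ι → (ι → X) → ℝ) : DependsOn (dual j g) {j}ᶜ := by
  refine fun x y h => expect_congr rfl fun a _ => prod_congr rfl fun i _ => congrArg (g i) ?_
  ext i'
  obtain rfl | hi := eq_or_ne i' j
  · simp
  · simpa [hi] using h i' hi

omit [Fintype X] in
lemma prod_update_eq_mul (j : ι) (g : ι → (ι → X) → ℝ) (c : (ι → X) → ℝ) (x : ι → X) :
    ∏ i, Function.update g j c i x = c x * ∏ i ∈ univ.erase j, g i x := by
  rw [← mul_prod_erase univ _ (mem_univ j), Function.update_self]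
  exact congrArg _ (prod_congr rfl fun i hi => by rw [Function.update_of_ne (ne_of_mem_erase hi)])

/-- The counting lemma for bounded functions: the factors are exchanged one at a time. -/
lemma abs_expect_prod_sub_le_card_mul (hg : ∀ i, DependsOn (g i) {i}ᶜ)
    (hg' : ∀ i, DependsOn (g' i) {i}ᶜ) (hg1 : ∀ i x, |g i x| ≤ 1) (hg1' : ∀ i x, |g' i x| ≤ 1)
    (hcut : ∀ j, CutNormLE j (fun x => g j x - g' j x) ε) :
    |(𝔼 x, ∏ i, g i x) - 𝔼 x, ∏ i, g' i x| ≤ Fintype.card ι * ε := by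
  suffices exchange : ∀ s : Finset ι,
      |(𝔼 x, ∏ i, g i x) - 𝔼 x, ∏ i, s.piecewise g' g i x| ≤ #s * ε by
    simpa using exchange univ
  intro s
  induction s using Finset.induction_on with
  | empty => simp
  | insert j s hj ih =>
    have difference : (𝔼 x, ∏ i, s.piecewise g' g i x) -
        𝔼 x, ∏ i, (insert j s).piecewise g' g i x =
        𝔼 x, (g j x - g' j x) * ∏ i ∈ univ.erase j, s.piecewise g' g i x := by
      rw [← expect_sub_distrib]
      refine expect_congr rfl fun x _ => ?_
      rw [piecewise_insert, prod_update_eq_mul, ← mul_prod_erase univ _ (mem_univ j),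
        piecewise_eq_of_notMem _ _ _ hj, sub_mul]
    have hcutj := hcut j (s.piecewise g' g)
      (fun i => by by_cases hi : i ∈ s <;> simp [hi, hg i, hg' i])
      (fun i x => by by_cases hi : i ∈ s <;> simp [hi, hg1 i x, hg1' i x])
    rw [← difference] at hcutj
    have := (abs_sub_le _ _ _).trans (add_le_add ih hcutj)
    rw [card_insert_of_notMem hj]
    push_cast
    linarith

variable [Nonempty X]

lemma expect_mul_dual {f : (ι → X) → ℝ} (hf : DependsOn f {j}ᶜ) (g : ι → (ι → X) → ℝ) :
    𝔼 x, f x * dual j g x = 𝔼 x, f x * ∏ i ∈ univ.erase j, g i x := by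
  rw [expect_update j fun x => f x * ∏ i ∈ univ.erase j, g i x]
  simp only [update_of_dependsOn_compl hf, dual, mul_expect]

lemma expect_mul_dual_mul_dual {f : (ι → X) → ℝ} (hf : DependsOn f {j}ᶜ)
    (g g' : ι → (ι → X) → ℝ) :
    𝔼 x, f x * (dual j g x * dual j g' x) =
      𝔼 x, 𝔼 a, f x * ∏ i ∈ univ.erase j, g i x * g' i (Function.update x j a) := by
  calc _ = 𝔼 x, f x * dual j g' x * dual j g x := expect_congr rfl fun x _ => by ring
    _ = 𝔼 x, f x * dual j g' x * ∏ i ∈ univ.erase j, g i x :=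
        expect_mul_dual (dependsOn_mul hf (dependsOn_dual j g')) g
    _ = _ := expect_congr rfl fun x _ => by
        rw [mul_right_comm, dual, mul_expect]
        simp only [prod_mul_distrib, mul_assoc]

lemma LinearFormsCondition.expect_sq_dual_sub_one_le (h : LinearFormsCondition ν η) (j : ι) :
    𝔼 x, (dual j ν x - 1) ^ 2 ≤ 3 * η := by
  have hne : (∅ : Finset ι) ≠ {j} := (singleton_nonempty j).ne_empty.symm
  have first := h.abs_expect_prod_vertex_sub_one_le (s := univ.erase j) (T := fun _ => {∅})
    (by simp) (w := fun i _ => ν i) fun _ _ => .inl rfl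
  have second := h.abs_expect_prod_vertex_sub_one_le (s := univ.erase j) (T := fun _ => {∅, {j}})
    (by simp) (w := fun i _ => ν i) fun _ _ => .inl rfl
  simp only [prod_singleton, expect_comp_vertex_pair j fun x _ => ∏ i ∈ univ.erase j, ν i x,
    Fintype.expect_const] at first
  simp only [prod_pair hne, expect_comp_vertex_pair j fun x y => ∏ i ∈ univ.erase j, ν i x * ν i y]
    at second
  have mean := expect_mul_dual (j := j) (f := 1) (fun _ _ _ => rfl) ν
  have meanSquare := expect_mul_dual_mul_dual (j := j) (f := 1) (fun _ _ _ => rfl) ν ν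
  simp only [Pi.one_apply, one_mul] at mean meanSquare
  calc 𝔼 x, (dual j ν x - 1) ^ 2
      = 𝔼 x, (dual j ν x * dual j ν x - 2 * dual j ν x + 1) :=
        expect_congr rfl fun x _ => by ring
    _ = (𝔼 x, dual j ν x * dual j ν x) - 2 * (𝔼 x, dual j ν x) + 1 := by
        rw [expect_add_distrib, expect_sub_distrib, ← mul_expect, Fintype.expect_const]
    _ ≤ 3 * η := by
        rw [mean, meanSquare]
        linarith [(abs_le.mp first).1, (abs_le.mp second).2]

/-- Replacing the dense weight `1` at each `g'` or the weight `ν` at each `g`, the deviation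
`ν j - 1` is orthogonal to each term of the expanded square. -/
lemma exists_expect_sub_one_mul_sq_dual_sub_le (ι : Type*) [Fintype ι] [DecidableEq ι] {ε : ℝ}
    (hε : 0 < ε) : ∃ η : ℝ, 0 < η ∧ ∀ (X : Type) [Fintype X] [Nonempty X]
      (ν g g' : ι → (ι → X) → ℝ), LinearFormsCondition ν η → (∀ i, DependsOn (ν i) {i}ᶜ) →
      Dominated g ν → Dominated g' 1 → ∀ j,
      𝔼 x, (ν j x - 1) * (dual j g x - dual j g' x) ^ 2 ≤ ε := by
  obtain ⟨η, hη, h⟩ := exists_abs_expect_sub_one_mul_le ι (ε := ε / 4) (by positivity)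
  refine ⟨η, hη, fun X _ _ ν g g' hL hν hg hg' j => ?_⟩
  have hdep : DependsOn (fun x => ν j x - 1) {j}ᶜ := fun _ _ hxy => congrArg (· - 1) (hν j hxy)
  have bound {b b' μ μ' : ι → (ι → X) → ℝ} (hb : Dominated b μ) (hb' : Dominated b' μ')
      (hμ : ∀ i, μ i = ν i ∨ μ i = 1) (hμ' : ∀ i, μ' i = ν i ∨ μ' i = 1) :
      |𝔼 x, (ν j x - 1) * (dual j b x * dual j b' x)| ≤ ε / 4 := by
    rw [expect_mul_dual_mul_dual hdep]
    exact h X ν μ μ' b b' hL hν hμ hμ' hb.dependsOn hb'.dependsOn hb.abs_le hb'.abs_le j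
  have hν i : ν i = ν i ∨ ν i = 1 := .inl rfl
  have h1 i : (1 : ι → (ι → X) → ℝ) i = ν i ∨ (1 : ι → (ι → X) → ℝ) i = 1 := .inr rfl
  calc 𝔼 x, (ν j x - 1) * (dual j g x - dual j g' x) ^ 2
      = (𝔼 x, (ν j x - 1) * (dual j g x * dual j g x)) -
          2 * (𝔼 x, (ν j x - 1) * (dual j g x * dual j g' x)) +
          𝔼 x, (ν j x - 1) * (dual j g' x * dual j g' x) := by
        rw [mul_expect, ← expect_sub_distrib, ← expect_add_distrib]
        exact expect_congr rfl fun x _ => by ring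
    _ ≤ ε := by
        linarith [(abs_le.mp (bound hg hg hν hν)).2, (abs_le.mp (bound hg hg' hν h1)).1,
          (abs_le.mp (bound hg' hg' h1 h1)).2]

/-- Truncate `P` at `1`: the excess is controlled by `Q`, and what remains is bounded. -/
lemma expect_sq_sub_le {Y : Type*} [Fintype Y] [Nonempty Y] {P P' Q : Y → ℝ} (hP : ∀ y, 0 ≤ P y)
    (hPQ : ∀ y, P y ≤ Q y) (hP' : ∀ y, P' y ≤ 1) (hτ0 : 0 ≤ τ) (hτ1 : τ ≤ 1)
    (hQ : 𝔼 y, (Q y - 1) ^ 2 ≤ τ ^ 2) (hmin : |𝔼 y, min (P y) 1 * (P y - P' y)| ≤ τ)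
    (hcor : |𝔼 y, P' y * (P y - P' y)| ≤ τ) : 𝔼 y, (P y - P' y) ^ 2 ≤ 8 * τ := by
  set excess : Y → ℝ := fun y => P y - min (P y) 1
  have excess_nonneg y : 0 ≤ excess y := sub_nonneg.mpr (min_le_left _ _)
  have expect_sq_excess : 𝔼 y, excess y ^ 2 ≤ τ ^ 2 := by
    refine (expect_le_expect fun y _ => ?_).trans hQ
    obtain h | h := le_total (P y) 1
    · simpa [excess, min_eq_left h] using sq_nonneg _
    · simpa only [excess, min_eq_right h] using
        pow_le_pow_left₀ (sub_nonneg.mpr h) (sub_le_sub_right (hPQ y) 1) 2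
  have expect_excess : 𝔼 y, excess y ≤ τ := by
    refine le_of_sq_le_sq ?_ hτ0
    simpa using (expect_mul_sq_le_sq_mul_sq univ 1 excess).trans
      (by simpa using expect_sq_excess)
  have expect_sq_truncated : 𝔼 y, (min (P y) 1 - P' y) ^ 2 ≤ 3 * τ := by
    calc 𝔼 y, (min (P y) 1 - P' y) ^ 2
        ≤ 𝔼 y, (min (P y) 1 * (P y - P' y) - P' y * (P y - P' y) + excess y) := by
          refine expect_le_expect fun y _ => ?_
          have := mul_nonneg (excess_nonneg y)
            (by linarith [hP' y, le_min (hP y) zero_le_one] : 0 ≤ min (P y) 1 - P' y + 1)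
          simp only [excess] at this ⊢
          nlinarith
      _ ≤ 3 * τ := by
          rw [expect_add_distrib, expect_sub_distrib]
          linarith [(abs_le.mp hmin).2, (abs_le.mp hcor).1]
  calc 𝔼 y, (P y - P' y) ^ 2 ≤ 𝔼 y, (2 * excess y ^ 2 + 2 * (min (P y) 1 - P' y) ^ 2) := by
        refine expect_le_expect fun y _ => ?_
        linarith [add_sq_le (a := excess y) (b := min (P y) 1 - P' y),
          show excess y + (min (P y) 1 - P' y) = P y - P' y by simp only [excess]; ring]
    _ ≤ 8 * τ := by
        rw [expect_add_distrib, ← mul_expect, ← mul_expect]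
        nlinarith

/-- The case of the counting lemma in which the factors other than the `j`-th can be compared
against bounded test functions. -/
lemma LinearFormsCondition.abs_expect_prod_sub_le (hL : LinearFormsCondition ν η) (hη1 : η ≤ 1)
    (hη : 3 * η ≤ τ ^ 2) (hτ0 : 0 ≤ τ) (hτ1 : τ ≤ 1) (hg : Dominated g ν) (hg' : Dominated g' 1)
    (hdev : 𝔼 x, (ν j x - 1) * (dual j g x - dual j g' x) ^ 2 ≤ τ)
    (hcor : ∀ c : (ι → X) → ℝ, DependsOn c {j}ᶜ → (∀ x, 0 ≤ c x) → (∀ x, c x ≤ 1) →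
      |𝔼 x, c x * (dual j g x - dual j g' x)| ≤ τ)
    (hcut : CutNormLE j (fun x => g j x - g' j x) ε) :
    |(𝔼 x, ∏ i, g i x) - 𝔼 x, ∏ i, g' i x| ≤ √(18 * τ) + ε := by
  have meanSquare : 𝔼 x, (dual j g x - dual j g' x) ^ 2 ≤ 8 * τ :=
    expect_sq_sub_le (hg.dual_nonneg j) (hg.dual_le j)
      (fun x => (hg'.dual_le j x).trans_eq (dual_one j x)) hτ0 hτ1
      ((hL.expect_sq_dual_sub_one_le j).trans hη)
      (hcor _ (fun _ _ h => congrArg (min · 1) (dependsOn_dual j g h))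
        (fun x => le_min (hg.dual_nonneg j x) zero_le_one) fun x => min_le_right _ _)
      (hcor _ (dependsOn_dual j g') (hg'.dual_nonneg j)
        fun x => (hg'.dual_le j x).trans_eq (dual_one j x))
  have weighted : 𝔼 x, ν j x * (dual j g x - dual j g' x) ^ 2 ≤ 9 * τ := by
    simp only [sub_mul, one_mul, expect_sub_distrib] at hdev
    linarith
  have sparse : |𝔼 x, g j x * (dual j g x - dual j g' x)| ≤ √(18 * τ) := by
    refine Real.abs_le_sqrt ((sq_expect_mul_le fun x => hg.abs_le j x).trans ?_)
    have hν : 𝔼 x, ν j x ≤ 2 := by linarith [hL.expect_le j]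
    have := mul_le_mul hν weighted (expect_nonneg fun x _ => mul_nonneg
      ((hg.nonneg j x).trans (hg.le j x)) (sq_nonneg _)) zero_le_two
    linarith
  have dense := hcut g' hg'.dependsOn hg'.abs_le
  have split : (𝔼 x, ∏ i, g i x) - 𝔼 x, ∏ i, g' i x =
      (𝔼 x, g j x * (dual j g x - dual j g' x)) +
        𝔼 x, (g j x - g' j x) * ∏ i ∈ univ.erase j, g' i x := by
    simp only [mul_sub, sub_mul, expect_sub_distrib, expect_mul_dual (hg.dependsOn j)]
    simp only [← mul_prod_erase univ _ (mem_univ j)]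
    ring
  rw [split]
  exact (abs_add_le _ _).trans (add_le_add sparse dense)

end Counting

/-- The induction on `T` replaces the weights by `1` one at a time. -/
lemma exists_abs_expect_prod_sub_le_of_eq_one {ι : Type*} [Fintype ι] [DecidableEq ι]
    (T : Finset ι) {ε : ℝ} (hε : 0 < ε) :
    ∃ η : ℝ, 0 < η ∧ ∀ (X : Type) [Fintype X] [Nonempty X] (ν g g' : ι → (ι → X) → ℝ),
      LinearFormsCondition ν η → (∀ i, DependsOn (ν i) {i}ᶜ) → (∀ i ∉ T, ν i = 1) →
      Dominated g ν → Dominated g' 1 → (∀ j, CutNormLE j (fun x => g j x - g' j x) η) →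
      |(𝔼 x, ∏ i, g i x) - 𝔼 x, ∏ i, g' i x| ≤ ε := by
  induction T using Finset.induction_on generalizing ε with
  | empty =>
    refine ⟨ε / (Fintype.card ι + 1), by positivity, fun X _ _ ν g g' _ _ hν hg hg' hcut => ?_⟩
    have hg1 i x : |g i x| ≤ 1 := by simpa [hν i (notMem_empty i)] using hg.abs_le i x
    refine (abs_expect_prod_sub_le_card_mul hg.dependsOn hg'.dependsOn hg1 hg'.abs_le hcut).trans ?_
    rw [mul_div_assoc', div_le_iff₀ (by positivity)]
    linarith
  | insert j T _ ih =>
    set τ : ℝ := min 1 ((ε / 2) ^ 2 / 18)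
    have hτ : 0 < τ := by positivity
    have hτε : √(18 * τ) ≤ ε / 2 := by
      rw [Real.sqrt_le_left (by positivity), ← le_div_iff₀' (by norm_num)]
      exact min_le_right _ _
    obtain ⟨η₁, hη₁, deviation⟩ := exists_expect_sub_one_mul_sq_dual_sub_le ι hτ
    obtain ⟨η₂, hη₂, counting⟩ := ih hτ
    obtain ⟨η, hη, h₁, h₂, h1, hε', hτ'⟩ :
        ∃ η : ℝ, 0 < η ∧ η ≤ η₁ ∧ η ≤ η₂ ∧ η ≤ 1 ∧ η ≤ ε / 2 ∧ η ≤ τ ^ 2 / 3 :=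
      ⟨min η₁ (min η₂ (min 1 (min (ε / 2) (τ ^ 2 / 3)))), by positivity, by simp, by simp, by simp,
        by simp, by simp⟩
    refine ⟨η, hη, fun X _ _ ν g g' hL hνdep hν hg hg' hcut => ?_⟩
    refine (hL.abs_expect_prod_sub_le h1 (by linarith) hτ.le (min_le_left _ _) hg hg'
      (deviation X ν g g' (hL.mono h₁) hνdep hg hg' j) (fun c hc hc0 hc1 => ?_) (hcut j)).trans
      (by linarith)
    have key := counting X _ _ _ ((hL.mono h₂).update_one j) (fun i => ?_) (fun i hi => ?_)
      (hg.update hc hc0 hc1) (Function.update_eq_self j (1 : ι → (ι → X) → ℝ) ▸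
        hg'.update hc hc0 hc1) fun i => ?_
    · simpa only [prod_update_eq_mul, mul_sub, expect_sub_distrib, expect_mul_dual hc] using key
    · obtain rfl | hi := eq_or_ne i j
      · rw [Function.update_self]
        exact fun _ _ _ => rfl
      · simpa [hi] using hνdep i
    · obtain rfl | hij := eq_or_ne i j
      · simp
      · simpa [hij] using hν i (by simp [hij, hi])
    · obtain rfl | hi := eq_or_ne i j
      · simpa [CutNormLE] using fun _ _ _ => hη₂.le
      · simpa [hi] using (hcut i).mono h₂

theorem exists_abs_expect_prod_sub_le (ι : Type*) [Fintype ι] [DecidableEq ι] {ε : ℝ}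
    (hε : 0 < ε) :
    ∃ η : ℝ, 0 < η ∧ ∀ (X : Type) [Fintype X] [Nonempty X] (ν g g' : ι → (ι → X) → ℝ),
      LinearFormsCondition ν η → (∀ i, DependsOn (ν i) {i}ᶜ) → Dominated g ν → Dominated g' 1 →
      (∀ j, CutNormLE j (fun x => g j x - g' j x) η) →
      |(𝔼 x, ∏ i, g i x) - 𝔼 x, ∏ i, g' i x| ≤ ε := by
  simpa using exists_abs_expect_prod_sub_le_of_eq_one (univ : Finset ι) hε

/-! ### The dense model theorem -/

lemma mul_mem_convexHull {A : Type*} [Ring A] [Algebra ℝ A] {Φ : Set A}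
    (hΦ : ∀ φ ∈ Φ, ∀ ψ ∈ Φ, φ * ψ ∈ convexHull ℝ Φ) {φ ψ : A} (hφ : φ ∈ convexHull ℝ Φ)
    (hψ : ψ ∈ convexHull ℝ Φ) : φ * ψ ∈ convexHull ℝ Φ := by
  have hleft {φ : A} (hφ : φ ∈ Φ) :
      convexHull ℝ Φ ⊆ LinearMap.mulLeft ℝ φ ⁻¹' convexHull ℝ Φ :=
    convexHull_min (hΦ φ hφ) ((convex_convexHull ℝ Φ).linear_preimage _)
  have hright : convexHull ℝ Φ ⊆ LinearMap.mulRight ℝ ψ ⁻¹' convexHull ℝ Φ :=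
    convexHull_min (fun φ hφ => hleft hφ hψ) ((convex_convexHull ℝ Φ).linear_preimage _)
  exact hright hφ

lemma pow_mem_closure_convexHull {A : Type*} [Ring A] [Algebra ℝ A] [TopologicalSpace A]
    [ContinuousMul A] {Φ : Set A} (hΦ1 : 1 ∈ Φ) (hΦ : ∀ φ ∈ Φ, ∀ ψ ∈ Φ, φ * ψ ∈ convexHull ℝ Φ)
    {ψ : A} (hψ : ψ ∈ closure (convexHull ℝ Φ)) (m : ℕ) : ψ ^ m ∈ closure (convexHull ℝ Φ) := by
  induction m with
  | zero => exact pow_zero ψ ▸ subset_closure (subset_convexHull ℝ Φ hΦ1)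
  | succ m ih =>
    rw [pow_succ]
    exact map_mem_closure₂ continuous_mul ih hψ fun _ hφ _ hψ => mul_mem_convexHull hΦ hφ hψ

section DenseModel
variable {G : Type*} [Fintype G]

lemma continuous_expect {T : Type*} [TopologicalSpace T] {F : T → G → ℝ}
    (h : ∀ a, Continuous fun t => F t a) : Continuous fun t => 𝔼 a, F t a := by
  simp only [Fintype.expect_eq_sum_div_card]
  fun_prop

lemma expect_mem_convexHull [Nonempty G] {E : Type*} [AddCommGroup E] [Module ℝ E]
    [Module ℚ≥0 E] {Φ : Set E} {F : G → E} (hF : ∀ z, F z ∈ Φ) : 𝔼 z, F z ∈ convexHull ℝ Φ := by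
  rw [expect, ← NNRat.cast_smul_eq_nnqsmul ℝ, smul_sum]
  exact (convex_convexHull ℝ Φ).sum_mem (fun _ _ => by positivity) (by simp)
    fun z _ => subset_convexHull ℝ Φ (hF z)

lemma abs_expect_mul_le_of_mem_closure_convexHull {Φ : Set (G → ℝ)} {h ψ : G → ℝ} {η : ℝ}
    (hΦ : ∀ φ ∈ Φ, |𝔼 a, h a * φ a| ≤ η) (hψ : ψ ∈ closure (convexHull ℝ Φ)) :
    |𝔼 a, h a * ψ a| ≤ η := by
  have linear : IsLinearMap ℝ fun ψ : G → ℝ => 𝔼 a, h a * ψ a :=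
    ⟨by simp [mul_add, expect_add_distrib], by simp [mul_left_comm, mul_expect]⟩
  have continuous : Continuous fun ψ : G → ℝ => 𝔼 a, h a * ψ a :=
    continuous_expect fun a => by fun_prop
  have hull : convexHull ℝ Φ ⊆ (fun ψ => 𝔼 a, h a * ψ a) ⁻¹' Set.Icc (-η) η :=
    convexHull_min (fun φ hφ => abs_le.mp (hΦ φ hφ)) ((convex_Icc _ _).is_linear_preimage linear)
  exact abs_le.mpr (closure_minimal hull (isClosed_Icc.preimage continuous) hψ)

lemma exists_isSaddlePointOn_expect (f : G → ℝ) {X Y : Set (G → ℝ)} (hX : Convex ℝ X)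
    (hXc : IsCompact X) (hX0 : X.Nonempty) (hY : Convex ℝ Y) (hYc : IsCompact Y)
    (hY0 : Y.Nonempty) :
    ∃ g ∈ X, ∃ ψ ∈ Y, IsSaddlePointOn X Y (fun g ψ => 𝔼 a, (f a - g a) * ψ a) g ψ := by
  refine Sion.exists_isSaddlePointOn hX0 hX hXc
    (fun ψ _ =>
      (continuous_expect fun a => by fun_prop).lowerSemicontinuous.lowerSemicontinuousOn _)
    (fun ψ _ => ConvexOn.quasiconvexOn ⟨hX, fun x _ y _ s t _ _ hst => le_of_eq ?_⟩) hY hY0 hYc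
    (fun g _ =>
      (continuous_expect fun a => by fun_prop).upperSemicontinuous.upperSemicontinuousOn _)
    (fun g _ => ConcaveOn.quasiconcaveOn ⟨hY, fun x _ y _ s t _ _ _ => le_of_eq ?_⟩)
  · simp only [smul_eq_mul, mul_expect, ← expect_add_distrib]
    refine expect_congr rfl fun a _ => ?_
    simp only [Pi.add_apply, Pi.smul_apply, smul_eq_mul]
    linear_combination (-(f a * ψ a)) * hst
  · simp only [smul_eq_mul, mul_expect, ← expect_add_distrib]
    refine expect_congr rfl fun a _ => ?_
    simp only [Pi.add_apply, Pi.smul_apply, smul_eq_mul]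
    ring

lemma abs_expect_mul_eval_le (P : Polynomial ℝ) {h ψ : G → ℝ} {η : ℝ}
    (hψ : ∀ m : ℕ, |𝔼 a, h a * ψ a ^ m| ≤ η) :
    |𝔼 a, h a * P.eval (ψ a)| ≤ (∑ n ∈ P.support, |P.coeff n|) * η := by
  calc |𝔼 a, h a * P.eval (ψ a)| = |∑ n ∈ P.support, P.coeff n * 𝔼 a, h a * ψ a ^ n| := by
        simp only [Polynomial.eval_eq_sum, Polynomial.sum, mul_sum, mul_expect, expect_sum_comm,
          mul_left_comm]
    _ ≤ ∑ n ∈ P.support, |P.coeff n| * η := by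
        refine (abs_sum_le_sum_abs _ _).trans (sum_le_sum fun n _ => ?_)
        rw [abs_mul]
        exact mul_le_mul_of_nonneg_left (hψ n) (abs_nonneg _)
    _ = _ := (sum_mul ..).symm

end DenseModel

/-- Approximate the positive part by a polynomial. -/
lemma exists_expect_sub_one_mul_max_le {ε : ℝ} (hε : 0 < ε) :
    ∃ η : ℝ, 0 < η ∧ ∀ (G : Type) [Fintype G] [Nonempty G] (ν ψ : G → ℝ), (∀ a, 0 ≤ ν a) →
      (∀ a, |ψ a| ≤ 1) → (∀ m : ℕ, |𝔼 a, (ν a - 1) * ψ a ^ m| ≤ η) →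
      𝔼 a, (ν a - 1) * max (ψ a) 0 ≤ ε := by
  obtain ⟨P, hP⟩ := exists_polynomial_near_of_continuousOn (-1) 1 (fun t => max t 0)
    (by fun_prop) (ε / 6) (by positivity)
  set C : ℝ := ∑ n ∈ P.support, |P.coeff n|
  have : 0 ≤ C := sum_nonneg fun n _ => abs_nonneg _
  refine ⟨min 1 (ε / (2 * (C + 1))), by positivity, fun G _ _ ν ψ hν hψ hpow => ?_⟩
  have mean : 𝔼 a, (ν a - 1) ≤ 1 := by
    simpa using (le_of_abs_le (hpow 0)).trans (min_le_left _ _)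
  have approx a : (ν a - 1) * max (ψ a) 0 ≤
      (ν a - 1) * P.eval (ψ a) + (ν a - 1 + 2) * (ε / 6) := by
    have := abs_lt.mp (hP (ψ a) (abs_le.mp (hψ a)))
    nlinarith [hν a]
  have main : 𝔼 a, (ν a - 1) * P.eval (ψ a) ≤ ε / 2 := by
    refine (le_of_abs_le (abs_expect_mul_eval_le P hpow)).trans ?_
    have : min 1 (ε / (2 * (C + 1))) * (2 * (C + 1)) ≤ ε :=
      (le_div_iff₀ (by positivity)).mp (min_le_right _ _)
    nlinarith [show 0 < min 1 (ε / (2 * (C + 1))) by positivity]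
  calc 𝔼 a, (ν a - 1) * max (ψ a) 0
      ≤ 𝔼 a, ((ν a - 1) * P.eval (ψ a) + (ν a - 1 + 2) * (ε / 6)) :=
        expect_le_expect fun a _ => approx a
    _ = (𝔼 a, (ν a - 1) * P.eval (ψ a)) + ((𝔼 a, (ν a - 1)) + 2) * (ε / 6) := by
        rw [expect_add_distrib, ← expect_mul, expect_add_distrib, Fintype.expect_const]
    _ ≤ ε := by nlinarith

/-- The abstract dense model theorem, for a class of tests whose products are convex combinations of
tests. The minimax theorem produces the model together with an optimal mixture `ψ` of tests, and the
best response to `ψ` is the indicator function of the set where `ψ` is positive. -/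
theorem exists_dense_model {ε : ℝ} (hε : 0 < ε) :
    ∃ η : ℝ, 0 < η ∧ ∀ (G : Type) [Fintype G] [Nonempty G] (Φ : Set (G → ℝ)), 1 ∈ Φ →
      (∀ φ ∈ Φ, -φ ∈ Φ) → Φ ⊆ Set.Icc (-1) 1 → (∀ φ ∈ Φ, ∀ ψ ∈ Φ, φ * ψ ∈ convexHull ℝ Φ) →
      ∀ ν f : G → ℝ, (∀ a, 0 ≤ f a) → (∀ a, f a ≤ ν a) →
      (∀ φ ∈ Φ, |𝔼 a, (ν a - 1) * φ a| ≤ η) →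
      ∃ g : G → ℝ, (∀ a, 0 ≤ g a) ∧ (∀ a, g a ≤ 1) ∧
        ∀ φ ∈ Φ, |𝔼 a, (f a - g a) * φ a| ≤ ε := by
  obtain ⟨η, hη, hmax⟩ := exists_expect_sub_one_mul_max_le hε
  refine ⟨η, hη, fun G _ _ Φ h1 hneg hΦ hmul ν f hf hfν hν => ?_⟩
  have hmem {φ} (hφ : φ ∈ Φ) : φ ∈ closure (convexHull ℝ Φ) :=
    subset_closure (subset_convexHull ℝ Φ hφ)
  have hbox : closure (convexHull ℝ Φ) ⊆ Set.Icc (-1) 1 :=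
    closure_minimal (convexHull_min hΦ (convex_Icc _ _)) isClosed_Icc
  obtain ⟨g, hg, ψ, hψ, hsaddle⟩ := exists_isSaddlePointOn_expect f
    (convex_Icc (0 : G → ℝ) 1) isCompact_Icc (Set.nonempty_Icc.mpr zero_le_one)
    (convex_convexHull ℝ Φ).closure (isCompact_Icc.of_isClosed_subset isClosed_closure hbox)
    ⟨1, hmem h1⟩
  set response : G → ℝ := {a | 0 < ψ a}.indicator 1
  have response_mem : response ∈ Set.Icc 0 1 :=
    ⟨fun a => Set.indicator_nonneg (fun _ _ => zero_le_one) a, indicator_one_le_one _⟩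
  have value : 𝔼 a, (f a - response a) * ψ a ≤ ε := by
    refine (expect_le_expect fun a _ => ?_).trans (hmax G ν ψ (fun a => (hf a).trans (hfν a))
      (fun a => abs_le.mpr ⟨(hbox hψ).1 a, (hbox hψ).2 a⟩) fun m =>
        abs_expect_mul_le_of_mem_closure_convexHull hν (pow_mem_closure_convexHull h1 hmul hψ m))
    obtain h | h := lt_or_ge 0 (ψ a)
    · simpa [response, h, h.le] using mul_le_mul_of_nonneg_right (hfν a) h.le
    · simpa [response, h, h.not_gt] using mul_nonpos_of_nonneg_of_nonpos (hf a) h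
  have hle φ (hφ : φ ∈ Φ) : 𝔼 a, (f a - g a) * φ a ≤ ε :=
    (hsaddle response response_mem φ (hmem hφ)).trans value
  refine ⟨g, hg.1, hg.2, fun φ hφ => abs_le.mpr ⟨?_, hle φ hφ⟩⟩
  have := hle (-φ) (hneg φ hφ)
  simp only [Pi.neg_apply, mul_neg, expect_neg_distrib] at this
  linarith

section FibreAverage
variable {G H : Type} [AddCommGroup G] [AddCommGroup H] [Fintype G] [Fintype H]

/-- The average of `w` over the fibre above `a` of the homomorphism `S`, of which `e` is a
section. -/
noncomputable def fibreAvg (S : H →+ G) (e : G →+ H) (w : H → ℝ) (a : G) : ℝ :=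
  𝔼 y, w (y - e (S y) + e a)

lemma expect_mul_fibreAvg {S : H →+ G} {e : G →+ H} (hSe : ∀ a, S (e a) = a) (h : G → ℝ)
    (w : H → ℝ) : 𝔼 a, h a * fibreAvg S e w a = 𝔼 y, h (S y) * w y := by
  let φ : H × G →+ H := (AddMonoidHom.id H - e.comp S).coprod e
  have hφ : Function.Surjective φ := fun y => ⟨(y, S y), by simp [φ]⟩
  rw [← expect_comp_addMonoidHom φ hφ, expect_prod_type, expect_comm]
  simp [φ, fibreAvg, mul_expect, hSe]

omit [Fintype G] in
lemma fibreAvg_one (S : H →+ G) (e : G →+ H) : fibreAvg S e 1 = 1 := by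
  ext a
  simp [fibreAvg]

omit [Fintype G] in
lemma fibreAvg_mul_fibreAvg (S : H →+ G) (e : G →+ H) (w w' : H → ℝ) (a : G) :
    fibreAvg S e w a * fibreAvg S e w' a =
      𝔼 z, fibreAvg S e (fun y => w y * w' (y + (z - e (S z)))) a := by
  simp only [fibreAvg]
  rw [expect_mul_expect]
  refine (expect_congr rfl fun y _ => ?_).trans (expect_comm ..)
  refine Fintype.expect_equiv (Equiv.subRight y) _ _ fun z => ?_
  simp only [Equiv.subRight_apply, map_sub]
  congr 2
  abel

theorem exists_dense_model_of_fibreAvg {ε : ℝ} (hε : 0 < ε) :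
    ∃ η : ℝ, 0 < η ∧ ∀ (G H : Type) [AddCommGroup G] [AddCommGroup H] [Fintype G] [Fintype H]
      (S : H →+ G) (e : G →+ H), (∀ a, S (e a) = a) → ∀ W : Set (H → ℝ), 1 ∈ W →
      (∀ w ∈ W, -w ∈ W) → (∀ w ∈ W, ∀ y, |w y| ≤ 1) → (∀ w ∈ W, ∀ w' ∈ W, w * w' ∈ W) →
      (∀ w ∈ W, ∀ z, (fun y => w (y + z)) ∈ W) →
      ∀ ν f : G → ℝ, (∀ a, 0 ≤ f a) → (∀ a, f a ≤ ν a) →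
      (∀ w ∈ W, |𝔼 y, (ν (S y) - 1) * w y| ≤ η) →
      ∃ g : G → ℝ, (∀ a, 0 ≤ g a) ∧ (∀ a, g a ≤ 1) ∧
        ∀ w ∈ W, |𝔼 y, (f (S y) - g (S y)) * w y| ≤ ε := by
  obtain ⟨η, hη, h⟩ := exists_dense_model hε
  refine ⟨η, hη, fun G H _ _ _ _ S e hSe W h1 hneg hbd hmul htr ν f hf hfν hν => ?_⟩
  have hnegΦ : ∀ φ ∈ fibreAvg S e '' W, -φ ∈ fibreAvg S e '' W := by
    rintro _ ⟨w, hw, rfl⟩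
    refine ⟨-w, hneg w hw, ?_⟩
    ext a
    simp [fibreAvg, expect_neg_distrib]
  have hbdΦ : fibreAvg S e '' W ⊆ Set.Icc (-1) 1 := by
    rintro _ ⟨w, hw, rfl⟩
    exact ⟨fun a => le_expect univ_nonempty fun y _ => neg_le_of_abs_le (hbd w hw _),
      fun a => expect_le univ_nonempty fun y _ => le_of_abs_le (hbd w hw _)⟩
  have hmulΦ : ∀ φ ∈ fibreAvg S e '' W, ∀ ψ ∈ fibreAvg S e '' W,
      φ * ψ ∈ convexHull ℝ (fibreAvg S e '' W) := by
    rintro _ ⟨w, hw, rfl⟩ _ ⟨w', hw', rfl⟩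
    have : fibreAvg S e w * fibreAvg S e w' =
        𝔼 z, fibreAvg S e (fun y => w y * w' (y + (z - e (S z)))) := by
      ext a
      rw [Pi.mul_apply, fibreAvg_mul_fibreAvg, expect_apply]
    rw [this]
    exact expect_mem_convexHull fun z => ⟨_, hmul w hw _ (htr w' hw' _), rfl⟩
  have hνΦ : ∀ φ ∈ fibreAvg S e '' W, |𝔼 a, (ν a - 1) * φ a| ≤ η := by
    rintro _ ⟨w, hw, rfl⟩
    rw [expect_mul_fibreAvg hSe fun a => ν a - 1]
    exact hν w hw
  obtain ⟨g, hg0, hg1, hg⟩ := h G (fibreAvg S e '' W) ⟨1, h1, fibreAvg_one S e⟩ hnegΦ hbdΦ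
    hmulΦ ν f hf hfν hνΦ
  refine ⟨g, hg0, hg1, fun w hw => ?_⟩
  rw [← expect_mul_fibreAvg hSe fun a => f a - g a]
  exact hg _ ⟨w, hw, rfl⟩

end FibreAverage

/-! ### The transference principle for arithmetic progressions -/

section Fibres
variable {H : Type*} [AddCommGroup H] [Fintype H]

lemma expect_eq_sum_ker_expect_indicator (φ : H →+ H) [Fintype φ.ker] {s : H → H}
    (hs : ∀ x, φ (s (φ x)) = φ x) (F : H → ℝ) :
    𝔼 x, F x = ∑ t : φ.ker, 𝔼 y, (Set.range φ).indicator (fun y => F (s y + t)) y := by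
  classical
  rw [← expect_sum_comm, Fintype.expect_eq_sum_div_card, Fintype.expect_eq_sum_div_card,
    ← sum_fiberwise univ φ F]
  congr 1
  refine sum_congr rfl fun y _ => ?_
  by_cases hy : y ∈ Set.range φ
  · simp only [Set.indicator_of_mem hy]
    obtain ⟨x₀, rfl⟩ := hy
    refine sum_bij' (fun x hx => (⟨x - s (φ x₀), ?_⟩ : φ.ker)) (fun t _ => s (φ x₀) + t)
      ?_ ?_ ?_ ?_ ?_
    · rw [AddMonoidHom.mem_ker, map_sub, hs, (mem_filter.mp hx).2, sub_self]
    · simp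
    · exact fun t _ => by simp [hs, AddMonoidHom.mem_ker.mp t.2]
    all_goals simp
  · simp only [Set.indicator_of_notMem hy, sum_const_zero]
    exact sum_eq_zero fun x hx => absurd ⟨x, (mem_filter.mp hx).2⟩ hy

lemma abs_expect_le_card_ker_mul (φ : H →+ H) {s : H → H} (hs : ∀ x, φ (s (φ x)) = φ x)
    (F : H → ℝ) {B : ℝ}
    (hB : ∀ t ∈ φ.ker, |𝔼 y, (Set.range φ).indicator (fun y => F (s y + t)) y| ≤ B) :
    |𝔼 x, F x| ≤ Nat.card φ.ker * B := by
  have := Fintype.ofFinite φ.ker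
  rw [expect_eq_sum_ker_expect_indicator φ hs]
  refine (abs_sum_le_sum_abs _ _).trans ((sum_le_sum fun t _ => hB t.1 t.2).trans_eq ?_)
  rw [sum_const, nsmul_eq_mul, card_univ, Nat.card_eq_fintype_card]

end Fibres

section CutNormSum
variable {ι X G : Type*} [Fintype ι] [DecidableEq ι] [Fintype X] [AddCommGroup G] [Fintype G]
  {i j : ι} {ε : ℝ}

lemma CutNormLE.comp_perm (σ : Equiv.Perm ι) {F : (ι → X) → ℝ} (h : CutNormLE j F ε) :
    CutNormLE (σ j) (fun x => F (x ∘ σ)) ε := by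
  intro u hu hu1
  refine le_of_eq_of_le (congrArg abs ?_) (h (fun i z => u (σ i) (z ∘ σ.symm))
    (fun i x y hxy => hu (σ i) fun k hk => hxy _ ?_) fun i z => hu1 _ _)
  · refine Fintype.expect_equiv (σ.symm.arrowCongr (Equiv.refl X)) _ _ fun x => ?_
    congr 1
    refine (prod_equiv σ (by simp) fun i _ => ?_).symm
    congr 1
    ext k
    simp [Equiv.arrowCongr]
  · exact fun hk' => hk (by simp [← Set.mem_singleton_iff.mp hk'])

/-- The sum of all coordinates but the `j`-th. -/
def coordSum (j : ι) : (ι → G) →+ G :=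
  ∑ i ∈ univ.erase j, Pi.evalAddMonoidHom (fun _ => G) i

omit [Fintype G] in
lemma coordSum_apply (j : ι) (x : ι → G) : coordSum j x = ∑ i ∈ univ.erase j, x i := by
  simp [coordSum]

omit [Fintype G] in
lemma coordSum_single (hij : i ≠ j) (a : G) : coordSum j (Pi.single i a) = a := by
  rw [coordSum_apply, sum_pi_single' i a]
  simp [hij]

omit [Fintype G] in
lemma coordSum_comp_perm (σ : Equiv.Perm ι) (x : ι → G) :
    coordSum j (x ∘ σ) = coordSum (σ j) x := by
  simp only [coordSum_apply]
  exact sum_equiv σ (by simp) fun i _ => rfl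

lemma CutNormLE.coordSum_change {f : G → ℝ} (h : CutNormLE i (fun y => f (coordSum i y)) ε)
    (j : ι) : CutNormLE j (fun y => f (coordSum j y)) ε := by
  simpa [coordSum_comp_perm] using h.comp_perm (Equiv.swap i j)

/-- A uniform point of `ι → G` is written as a uniform element of the kernel of `coordSum j` plus
the dilate of a uniform point. -/
lemma CutNormLE.of_comp_piMap {c : ι → G →+ G} (hij : i ≠ j) (hc : Function.Surjective (c i))
    {f : G → ℝ} (h : CutNormLE j (fun x => f (coordSum j (AddMonoidHom.piMap c x))) ε) :
    CutNormLE j (fun y => f (coordSum j y)) ε := by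
  intro u hu hu1
  let κ : (ι → G) →+ (ι → G) :=
    AddMonoidHom.id _ - (AddMonoidHom.single (fun _ => G) i).comp (coordSum j)
  have hκ (t : ι → G) : coordSum j (κ t) = 0 := by simp [κ, coordSum_single hij]
  let φ : (ι → G) × (ι → G) →+ (ι → G) := κ.coprod (AddMonoidHom.piMap c)
  have hφ : Function.Surjective φ := fun y => by
    obtain ⟨b, hb⟩ := hc (coordSum j y)
    refine ⟨(y, Pi.single i b), ?_⟩
    have : AddMonoidHom.piMap c (Pi.single i b) = Pi.single i (coordSum j y) := by
      ext k
      rcases eq_or_ne k i with rfl | hk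
      · simp [hb]
      · simp [hk]
    simp [φ, κ, this]
  rw [← expect_comp_addMonoidHom φ hφ, expect_prod_type]
  refine (abs_expect_le _ _).trans (expect_le univ_nonempty fun t _ => ?_)
  refine le_of_eq_of_le (congrArg abs (expect_congr rfl fun x _ => ?_))
    (h (fun i x => u i (φ (t, x))) (fun i x y hxy => hu i fun k hk => ?_) fun i x => hu1 _ _)
  · simp [φ, hκ]
  · simp [φ, hxy k hk]

omit [Fintype X] in
lemma prod_indicator_eq_indicator_pi (hι : 2 < Fintype.card ι) (R : ι → Set X) (j : ι)
    (y : ι → X) : ∏ i ∈ univ.erase j, (({i}ᶜ : Set ι).pi R).indicator (1 : (ι → X) → ℝ) y =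
      (Set.univ.pi R).indicator 1 y := by
  by_cases hy : y ∈ Set.univ.pi R
  · rw [Set.indicator_of_mem hy]
    refine prod_eq_one fun i _ => Set.indicator_of_mem (Set.mem_pi.mpr fun k _ => hy k trivial) _
  · rw [Set.indicator_of_notMem hy]
    obtain ⟨k, hk⟩ : ∃ k, y k ∉ R k := by simpa [Set.mem_pi] using hy
    obtain ⟨i, hij, hik⟩ :=
      ENat.exists_ne_ne_of_three_le (by simpa using Nat.succ_le_iff.mpr hι) j k
    exact prod_eq_zero (mem_erase.mpr ⟨hij, mem_univ i⟩)
      (Set.indicator_of_notMem (fun h => hk (Set.mem_pi.mp h k hik.symm)) _)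

/-- The average over `x` is resolved along the fibres of the dilation. At least three coordinates
are needed in order to distribute the indicator function of its image over the test functions. -/
lemma CutNormLE.comp_piMap (hι : 2 < Fintype.card ι) (c : ι → G →+ G) {f : G → ℝ}
    (h : CutNormLE j (fun y => f (coordSum j y)) ε) :
    CutNormLE j (fun x => f (coordSum j (AddMonoidHom.piMap c x)))
      (Nat.card (AddMonoidHom.piMap c).ker * ε) := by
  intro u hu hu1
  let s : (ι → G) → ι → G := Pi.map fun i => Function.invFun (c i)
  have hs {y : ι → G} (hy : y ∈ Set.univ.pi fun i => Set.range (c i)) :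
      AddMonoidHom.piMap c (s y) = y := funext fun i => Function.invFun_eq (hy i trivial)
  have hrange : Set.range (AddMonoidHom.piMap c) = Set.univ.pi fun i => Set.range (c i) :=
    Set.range_piMap fun i => c i
  refine abs_expect_le_card_ker_mul _ (s := s) (fun x => hs (hrange ▸ Set.mem_range_self x)) _
    fun t ht => ?_
  let v (i : ι) (y : ι → G) : ℝ :=
    u i (s y + t) * (({i}ᶜ : Set ι).pi fun k => Set.range (c k)).indicator 1 y
  have hv (i : ι) : DependsOn (v i) {i}ᶜ := by
    refine dependsOn_mul (fun x y hxy => hu i fun k hk => ?_) fun x y hxy => ?_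
    · simp [s, hxy k hk]
    · simp only [Set.indicator, Set.mem_pi]
      congr 1
      exact propext (forall₂_congr fun k hk => by rw [hxy k hk])
  have hv1 (i : ι) (y : ι → G) : |v i y| ≤ 1 := by
    rw [abs_mul]
    refine mul_le_one₀ (hu1 _ _) (abs_nonneg _) ?_
    classical
    rw [Set.indicator_apply]
    split_ifs <;> simp
  refine le_of_eq_of_le (congrArg abs (expect_congr rfl fun y _ => ?_)) (h v hv hv1)
  rw [prod_mul_distrib, prod_indicator_eq_indicator_pi hι, hrange]
  by_cases hy : y ∈ Set.univ.pi fun i => Set.range (c i)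
  · simp [Set.indicator_of_mem hy, hs hy, AddMonoidHom.mem_ker.mp ht]
  · simp [Set.indicator_of_notMem hy]

/-- The products of bounded functions each of which misses one of the coordinates other than `j`:
the functions against which the cut norm at `j` is tested. -/
def cutTests (X : Type*) (j : ι) : Set ((ι → X) → ℝ) :=
  {w | ∃ v : ι → (ι → X) → ℝ, (∀ i, DependsOn (v i) {i}ᶜ) ∧ (∀ i x, |v i x| ≤ 1) ∧
    w = fun x => ∏ i ∈ univ.erase j, v i x}

lemma cutNormLE_iff_forall_cutTests {h : (ι → X) → ℝ} :
    CutNormLE j h ε ↔ ∀ w ∈ cutTests X j, |𝔼 x, h x * w x| ≤ ε := by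
  constructor
  · rintro hh _ ⟨v, hv, hv1, rfl⟩
    exact hh v hv hv1
  · exact fun hh v hv hv1 => hh _ ⟨v, hv, hv1, rfl⟩

omit [Fintype X] in
lemma one_mem_cutTests (j : ι) : 1 ∈ cutTests X j :=
  ⟨1, fun _ _ _ _ => rfl, by simp, by ext; simp⟩

omit [Fintype X] in
lemma neg_mem_cutTests [Nontrivial ι] {w : (ι → X) → ℝ} (hw : w ∈ cutTests X j) :
    -w ∈ cutTests X j := by
  obtain ⟨v, hv, hv1, rfl⟩ := hw
  obtain ⟨i₀, hi₀⟩ := exists_ne j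
  let sign (i : ι) : ℝ := if i = i₀ then -1 else 1
  refine ⟨fun i x => sign i * v i x, fun i x y hxy => congrArg (sign i * ·) (hv i hxy),
    fun i x => ?_, funext fun x => ?_⟩
  · simp only [sign, abs_mul, apply_ite abs, abs_neg, abs_one, ite_self, one_mul]
    exact hv1 i x
  · have hsign : ∏ i ∈ univ.erase j, sign i = -1 := by simp [sign, hi₀]
    simp [prod_mul_distrib, hsign]

omit [Fintype X] in
lemma abs_le_one_of_mem_cutTests {w : (ι → X) → ℝ} (hw : w ∈ cutTests X j) (x : ι → X) :
    |w x| ≤ 1 := by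
  obtain ⟨v, -, hv1, rfl⟩ := hw
  rw [abs_prod]
  exact prod_le_one (fun _ _ => abs_nonneg _) fun i _ => hv1 i x

omit [Fintype X] in
lemma mul_mem_cutTests {w w' : (ι → X) → ℝ} (hw : w ∈ cutTests X j) (hw' : w' ∈ cutTests X j) :
    w * w' ∈ cutTests X j := by
  obtain ⟨v, hv, hv1, rfl⟩ := hw
  obtain ⟨v', hv', hv1', rfl⟩ := hw'
  refine ⟨fun i x => v i x * v' i x, fun i => dependsOn_mul (hv i) (hv' i), fun i x => ?_,
    funext fun x => prod_mul_distrib.symm⟩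
  rw [abs_mul]
  exact mul_le_one₀ (hv1 i x) (abs_nonneg _) (hv1' i x)

omit [Fintype G] in
lemma comp_add_mem_cutTests {w : (ι → G) → ℝ} (hw : w ∈ cutTests G j) (z : ι → G) :
    (fun x => w (x + z)) ∈ cutTests G j := by
  obtain ⟨v, hv, hv1, rfl⟩ := hw
  refine ⟨fun i x => v i (x + z), fun i x y hxy => hv i fun k hk => ?_, fun i x => hv1 i _, rfl⟩
  simp [hxy k hk]

end CutNormSum

section ProgressionForm
variable {k : ℕ} {G : Type*} [AddCommGroup G]

/-- The coefficient `i - j` of the `i`-th coordinate in `progressionForm j`, except that the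
vanishing coefficient at `i = j` is replaced by the identity. -/
def progressionCoeff (j i : Fin k) : G →+ G :=
  if i = j then AddMonoidHom.id G else zsmulAddGroupHom ((i : ℤ) - (j : ℤ))

/-- The linear form `∑ i, (i - j) • x i`, whose values as `j` varies form an arithmetic
progression. -/
def progressionForm (j : Fin k) : (Fin k → G) →+ G :=
  (coordSum j).comp (AddMonoidHom.piMap (progressionCoeff j))

lemma progressionForm_apply (j : Fin k) (x : Fin k → G) :
    progressionForm j x = ∑ i : Fin k, ((i : ℤ) - (j : ℤ)) • x i := by
  rw [← sum_erase univ (a := j) (by simp), progressionForm, AddMonoidHom.comp_apply,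
    coordSum_apply]
  refine sum_congr rfl fun i hi => ?_
  simp [progressionCoeff, ne_of_mem_erase hi]

lemma dependsOn_comp_progressionForm {β : Type*} (j : Fin k) (f : G → β) :
    DependsOn (fun x => f (progressionForm j x)) {j}ᶜ := by
  intro x y hxy
  simp only [progressionForm, AddMonoidHom.comp_apply, coordSum_apply]
  congr 1
  exact sum_congr rfl fun i hi => by simp [hxy i (ne_of_mem_erase hi)]

lemma card_ker_piMap_le {ι : Type*} [Fintype ι] [Finite G] {c : ι → G →+ G} {K : ℕ}
    (hc : ∀ i, Nat.card (c i).ker ≤ K) :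
    Nat.card (AddMonoidHom.piMap c).ker ≤ K ^ Fintype.card ι := by
  calc Nat.card (AddMonoidHom.piMap c).ker
      ≤ Nat.card (∀ i, (c i).ker) :=
        Nat.card_le_card_of_injective
          (fun x i => ⟨x.1 i, congrFun (AddMonoidHom.mem_ker.mp x.2) i⟩)
          fun x y hxy => Subtype.ext (funext fun i => congrArg Subtype.val (congrFun hxy i))
    _ = ∏ i, Nat.card (c i).ker := Nat.card_pi
    _ ≤ K ^ Fintype.card ι := prod_le_pow_card _ _ _ fun i _ => hc i

lemma card_ker_zsmulAddGroupHom_le [Finite G] [IsAddCyclic G] {c : ℤ} (hc : c ≠ 0) :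
    Nat.card (zsmulAddGroupHom c : G →+ G).ker ≤ c.natAbs := by
  classical
  have := Fintype.ofFinite G
  refine le_of_eq_of_le ?_
    (IsAddCyclic.card_nsmul_eq_zero_le (α := G) (Int.natAbs_pos.mpr hc))
  rw [Nat.card_eq_fintype_card, Fintype.card_subtype]
  simp [AddMonoidHom.mem_ker, natAbs_nsmul_eq_zero]

lemma card_ker_progressionCoeff_le [Finite G] [IsAddCyclic G] (j i : Fin k) :
    Nat.card (progressionCoeff j i : G →+ G).ker ≤ k := by
  rw [progressionCoeff]
  split_ifs with hij
  · have : (AddMonoidHom.id G).ker = ⊥ := rfl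
    simpa [this] using Nat.one_le_of_lt i.isLt
  · exact (card_ker_zsmulAddGroupHom_le (by omega)).trans (by omega)

/-- The coefficient of `x 1` in `progressionForm 0` is `1`, so that `CutNormLE.of_comp_piMap`
applies. -/
lemma exists_abs_expect_sub_one_mul_cutTests_le [NeZero k] (hk : 2 ≤ k) {ε : ℝ} (hε : 0 < ε) :
    ∃ η : ℝ, 0 < η ∧ ∀ (G : Type) [AddCommGroup G] [Fintype G] (ν : G → ℝ),
      LinearFormsCondition (fun (j : Fin k) x => ν (progressionForm j x)) η →
      ∀ w ∈ cutTests G (0 : Fin k), |𝔼 y, (ν (coordSum 0 y) - 1) * w y| ≤ ε := by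
  obtain ⟨η, hη, h⟩ := exists_abs_expect_sub_one_mul_le (Fin k) hε
  refine ⟨η, hη, fun G _ _ ν hν => cutNormLE_iff_forall_cutTests.mp ?_⟩
  have h10 : (⟨1, hk⟩ : Fin k) ≠ 0 := by simp [Fin.ext_iff]
  refine CutNormLE.of_comp_piMap (c := progressionCoeff 0) (f := fun a => ν a - 1) h10
    (fun a => ⟨a, by simp [progressionCoeff, h10]⟩) fun u hu hu1 => ?_
  refine le_of_eq_of_le (congrArg abs (expect_congr rfl fun x _ => ?_))
    (h G _ 1 1 u 1 hν (fun j => dependsOn_comp_progressionForm j ν) (fun _ => .inr rfl)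
      (fun _ => .inr rfl) hu (fun _ _ _ _ => rfl) hu1 (by simp) 0)
  simp [progressionForm]

end ProgressionForm

theorem exists_cutNormLE_progressionForm {k : ℕ} (hk : 3 ≤ k) {ε : ℝ} (hε : 0 < ε) :
    ∃ η : ℝ, 0 < η ∧ ∀ (G : Type) [AddCommGroup G] [Fintype G] [IsAddCyclic G] (ν f : G → ℝ),
      LinearFormsCondition (fun (j : Fin k) x => ν (progressionForm j x)) η →
      (∀ a, 0 ≤ f a) → (∀ a, f a ≤ ν a) →
      ∃ g : G → ℝ, (∀ a, 0 ≤ g a) ∧ (∀ a, g a ≤ 1) ∧ |(𝔼 a, f a) - 𝔼 a, g a| ≤ ε ∧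
        ∀ j : Fin k,
          CutNormLE j (fun x => f (progressionForm j x) - g (progressionForm j x)) ε := by
  have : NeZero k := ⟨by omega⟩
  have : Nontrivial (Fin k) := Fin.nontrivial_iff_two_le.mpr (by omega)
  have hpow : (1 : ℝ) ≤ (k : ℝ) ^ k := one_le_pow₀ (by exact_mod_cast NeZero.one_le)
  obtain ⟨η₁, hη₁, hmodel⟩ := exists_dense_model_of_fibreAvg (div_pos hε (by linarith))
  obtain ⟨η, hη, htests⟩ := exists_abs_expect_sub_one_mul_cutTests_le (k := k) (by omega) hη₁
  refine ⟨η, hη, fun G _ _ _ ν f hν hf hfν => ?_⟩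
  obtain ⟨i, hi⟩ := exists_ne (0 : Fin k)
  have hsec (a : G) : coordSum 0 (AddMonoidHom.single (fun _ => G) i a) = a := coordSum_single hi a
  obtain ⟨g, hg0, hg1, hg⟩ := hmodel G (Fin k → G) (coordSum 0) _ hsec (cutTests G 0)
    (one_mem_cutTests 0) (fun _ => neg_mem_cutTests) (fun _ => abs_le_one_of_mem_cutTests)
    (fun _ hw _ => mul_mem_cutTests hw)
    (fun _ => comp_add_mem_cutTests) ν f hf hfν (htests G ν hν)
  refine ⟨g, hg0, hg1, ?_, fun j => ?_⟩
  · have h1 := hg 1 (one_mem_cutTests 0)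
    simp only [Pi.one_apply, mul_one] at h1
    rw [expect_comp_addMonoidHom (coordSum 0) (fun a => ⟨_, hsec a⟩)
      fun a => f a - g a, expect_sub_distrib] at h1
    exact h1.trans (div_le_self hε.le hpow)
  · have hcut : CutNormLE j (fun y => f (coordSum j y) - g (coordSum j y)) (ε / k ^ k) :=
      (cutNormLE_iff_forall_cutTests.mpr hg).coordSum_change (f := fun a => f a - g a) j
    refine (CutNormLE.comp_piMap (f := fun a => f a - g a) (hk.trans_eq (Fintype.card_fin k).symm)
      (progressionCoeff j) hcut).mono ?_
    have hker : Nat.card (AddMonoidHom.piMap (progressionCoeff (G := G) j)).ker ≤ k ^ k := by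
      simpa using card_ker_piMap_le (card_ker_progressionCoeff_le (G := G) j)
    rw [mul_div_left_comm]
    refine mul_le_of_le_one_right hε.le ((div_le_one (by linarith)).mpr (by exact_mod_cast hker))

/-! ### The relative Szemerédi theorem with multiplicity -/

section Progressions
variable {k : ℕ} {G : Type*} [AddCommGroup G]

lemma progressionForm_eq_add_nsmul [NeZero k] (j : Fin k) (x : Fin k → G) :
    progressionForm j x = progressionForm 0 x + (j : ℕ) • -∑ i, x i := by
  rw [smul_neg, ← sub_eq_add_neg, smul_sum]
  simp [progressionForm_apply, sub_smul, sum_sub_distrib]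

/-- The forms are the terms of the progression with first term `progressionForm 0 x` and common
difference `-∑ i, x i`, and these two are independent and uniform. -/
lemma expect_prod_progressionForm [Fintype G] (hk : 2 ≤ k) (F : G → ℝ) :
    𝔼 x : Fin k → G, ∏ j, F (progressionForm j x) =
      𝔼 p : G × G, ∏ j : Fin k, F (p.1 + (j : ℕ) • p.2) := by
  have : NeZero k := ⟨by omega⟩
  let i₁ : Fin k := ⟨1, hk⟩
  let φ : (Fin k → G) →+ G × G :=
    (progressionForm 0).prod (-∑ i, Pi.evalAddMonoidHom (fun _ => G) i)
  have hφ : Function.Surjective φ := fun ⟨a, d⟩ => by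
    refine ⟨Pi.single i₁ a + Pi.single 0 (-d - a), Prod.ext ?_ ?_⟩
    · have h₁ : progressionForm 0 (Pi.single i₁ a : Fin k → G) = a := by
        rw [progressionForm_apply, sum_eq_single i₁ (fun i _ hi => by simp [hi]) (by simp)]
        simp [i₁]
      have h₀ : progressionForm 0 (Pi.single 0 (-d - a) : Fin k → G) = 0 := by
        rw [progressionForm_apply, sum_eq_single 0 (fun i _ hi => by simp [hi]) (by simp)]
        simp
      simp [φ, h₁, h₀]
    · simp [φ, sum_add_distrib]
  rw [← expect_comp_addMonoidHom φ hφ]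
  refine expect_congr rfl fun x _ => prod_congr rfl fun j _ => ?_
  simp [φ, progressionForm_eq_add_nsmul j x]

end Progressions

theorem exists_le_expect_prod_progression_of_linearFormsCondition {k : ℕ} (hk : 3 ≤ k) {δ : ℝ}
    (hδ : 0 < δ) :
    ∃ c : ℝ, 0 < c ∧ ∃ η : ℝ, 0 < η ∧ ∀ (G : Type) [AddCommGroup G] [Fintype G] [IsAddCyclic G]
      (ν f : G → ℝ), LinearFormsCondition (fun (j : Fin k) x => ν (progressionForm j x)) η →
      (∀ a, 0 ≤ f a) → (∀ a, f a ≤ ν a) → δ ≤ 𝔼 a, f a →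
      c ≤ 𝔼 p : G × G, ∏ j : Fin k, f (p.1 + (j : ℕ) • p.2) := by
  obtain ⟨K, rfl⟩ : ∃ K, k = K + 1 := ⟨k - 1, by omega⟩
  obtain ⟨c, hc, dense⟩ := exists_le_expect_prod_progression K (half_pos hδ)
  obtain ⟨ε, hε, counting⟩ := exists_abs_expect_prod_sub_le (Fin (K + 1)) (half_pos hc)
  obtain ⟨η, hη, transference⟩ := exists_cutNormLE_progressionForm hk (lt_min hε (half_pos hδ))
  refine ⟨c / 2, half_pos hc, min ε η, lt_min hε hη, fun G _ _ _ ν f hν f_nonneg f_le hf => ?_⟩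
  obtain ⟨g, g_nonneg, g_le, hfg, hcut⟩ :=
    transference G ν f (hν.mono (min_le_right _ _)) f_nonneg f_le
  have hg : δ / 2 ≤ 𝔼 a, g a := by
    have := (abs_le.mp (hfg.trans (min_le_right _ _))).2
    linarith
  have hcount := counting G (fun j x => ν (progressionForm j x))
    (fun j x => f (progressionForm j x)) (fun j x => g (progressionForm j x))
    (hν.mono (min_le_left _ _)) (fun j => dependsOn_comp_progressionForm j ν)
    ⟨fun j => dependsOn_comp_progressionForm j f, fun _ _ => f_nonneg _, fun _ _ => f_le _⟩
    ⟨fun j => dependsOn_comp_progressionForm j g, fun _ _ => g_nonneg _, fun _ _ => g_le _⟩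
    fun j => (hcut j).mono (min_le_left _ _)
  rw [expect_prod_progressionForm (by omega), expect_prod_progressionForm (by omega)] at hcount
  linarith [(abs_le.mp hcount).1, dense G g g_nonneg g_le hg]

/-! ### Pseudorandom sets are not too sparse -/

section Sparse
variable {ι X : Type*} [DecidableEq ι]

lemma prod_powerset_vertex_mul_swapOn {i : ι} {s : Finset ι} (hi : i ∉ s) (f : (ι → X) → ℝ)
    (p : ι → X × X) :
    (∏ t ∈ s.powerset, f (vertex t p)) * ∏ t ∈ s.powerset, f (vertex t (swapOn {i} p)) =
      ∏ t ∈ (insert i s).powerset, f (vertex t p) := by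
  rw [prod_powerset_insert hi]
  congr 1
  refine prod_congr rfl fun t ht => ?_
  rw [vertex_swapOn (disjoint_singleton_left.mpr fun h => hi (mem_powerset.mp ht h)), insert_eq]

variable [Fintype ι] [Fintype X] [Nonempty X]

/-- The two copies of the coordinate `i` agree with probability `1 / card X`. -/
lemma IgnoresSnd.expect_sq_le {i : ι} {P : (ι → X × X) → ℝ} (hP : IgnoresSnd i P)
    (P_nonneg : ∀ p, 0 ≤ P p) :
    𝔼 p, P p ^ 2 ≤ Fintype.card X * 𝔼 p, P p * P (swapOn {i} p) := by
  rw [expect_update i fun p => P p ^ 2, expect_update i fun p => P p * P (swapOn {i} p), mul_expect]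
  refine expect_le_expect fun p _ => ?_
  rw [expect_prod_type, expect_prod_type, mul_expect]
  refine expect_le_expect fun a _ => ?_
  have diagonal (b : X) : P (Function.update p i (a, b)) = P (Function.update p i (a, a)) :=
    hP p a b a
  simp only [diagonal, swapOn_singleton, Function.update_idem, Function.update_self,
    Prod.swap_prod_mk, Fintype.expect_const, Fintype.card_mul_expect]
  rw [sq]
  refine (le_of_eq ?_).trans (single_le_sum (f := fun b => P (Function.update p i (a, a)) *
    P (Function.update p i (b, a))) (fun b _ => mul_nonneg (P_nonneg _) (P_nonneg _)) (mem_univ a))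
  rfl

/-- Each form other than the `i₀`-th is evaluated at two vertices, which differ at the coordinate
`τ j`; doubling the coordinate `i₀` as well yields a product of `4 (card ι - 1)` values of the
weights. -/
lemma LinearFormsCondition.sq_pow_le {ν : ι → (ι → X) → ℝ} {η m : ℝ}
    (h : LinearFormsCondition ν η) (hι : 2 < Fintype.card ι) (hη : η ≤ 1 / 2)
    (ν_nonneg : ∀ i x, 0 ≤ ν i x) (hν : ∀ i x, ν i x ^ 2 = m * ν i x) :
    (m ^ (Fintype.card ι - 1)) ^ 2 ≤ 3 * Fintype.card X := by
  obtain ⟨i₀⟩ : Nonempty ι := Fintype.card_pos_iff.mp (by omega)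
  choose τ τ_ne₀ τ_ne using
    ENat.exists_ne_ne_of_three_le (by simpa using Nat.succ_le_iff.mpr hι) i₀
  have hτ₀ j : i₀ ∉ ({τ j} : Finset ι) := notMem_singleton.mpr (τ_ne₀ j).symm
  have hτ j : j ∉ ({τ j} : Finset ι) := notMem_singleton.mpr (τ_ne j).symm
  let P (p : ι → X × X) : ℝ := ∏ j ∈ univ.erase i₀, ∏ t ∈ ({τ j} : Finset ι).powerset,
    ν j (vertex t p)
  have P_nonneg p : 0 ≤ P p := prod_nonneg fun _ _ => prod_nonneg fun _ _ => ν_nonneg _ _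
  have hP : IgnoresSnd i₀ P := .prod fun j _ => .prod fun t ht =>
    ignoresSnd_comp_vertex (fun hi => hτ₀ j (mem_powerset.mp ht hi)) _
  have P_sq p : P p ^ 2 = (m ^ (Fintype.card ι - 1)) ^ 2 * P p := by
    simp only [P, ← prod_pow, hν, prod_mul_distrib, prod_const, card_powerset, card_singleton,
      card_erase_of_mem (mem_univ i₀), card_univ, pow_one]
    rw [pow_right_comm]
  have expect_P : 1 / 2 ≤ 𝔼 p, P p := by
    have := (abs_le.mp (h.abs_expect_prod_vertex_sub_one_le (s := univ.erase i₀)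
      (fun j _ t ht hj => hτ j (mem_powerset.mp ht hj)) fun _ _ => .inl rfl)).1
    linarith
  have expect_P_mul : 𝔼 p, P p * P (swapOn {i₀} p) ≤ 3 / 2 := by
    simp only [P, ← prod_mul_distrib, prod_powerset_vertex_mul_swapOn (hτ₀ _)]
    have := (abs_le.mp (h.abs_expect_prod_vertex_sub_one_le (s := univ.erase i₀)
      (T := fun j => (insert i₀ {τ j} : Finset ι).powerset) (fun j hj t ht hjt => ?_)
      fun _ _ => .inl rfl)).2
    · linarith
    · exact (mem_insert.mp (mem_powerset.mp ht hjt)).elim (ne_of_mem_erase hj) (hτ j)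
  have := hP.expect_sq_le P_nonneg
  simp only [P_sq, ← mul_expect] at this
  nlinarith [mul_le_mul_of_nonneg_left expect_P (sq_nonneg (m ^ (Fintype.card ι - 1))),
    mul_le_mul_of_nonneg_left expect_P_mul (Nat.cast_nonneg (α := ℝ) (Fintype.card X))]

end Sparse

section RelIndicator
variable {G : Type*} [Fintype G] [DecidableEq G] {S A : Finset G}

/-- The indicator function of `A`, normalized so that `relIndicator S S` has average `1`. -/
noncomputable def relIndicator (S A : Finset G) (x : G) : ℝ :=
  (Fintype.card G : ℝ) / #S * if x ∈ A then 1 else 0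

lemma relIndicator_nonneg (x : G) : 0 ≤ relIndicator S A x :=
  mul_nonneg (by positivity) (by split_ifs <;> simp)

lemma relIndicator_mono {B : Finset G} (h : A ⊆ B) (x : G) :
    relIndicator S A x ≤ relIndicator S B x := by
  refine mul_le_mul_of_nonneg_left ?_ (by positivity)
  by_cases hx : x ∈ A
  · simp [hx, h hx]
  · simpa [hx] using ite_nonneg zero_le_one le_rfl

lemma relIndicator_le (x : G) : relIndicator S A x ≤ Fintype.card G / #S :=
  mul_le_of_le_one_right (by positivity) (by split_ifs <;> simp)

lemma sq_relIndicator (x : G) :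
    relIndicator S A x ^ 2 = Fintype.card G / #S * relIndicator S A x := by
  rw [relIndicator]
  split_ifs <;> ring

lemma expect_relIndicator [Nonempty G] : 𝔼 x, relIndicator S A x = #A / #S := by
  simp [relIndicator, Fintype.expect_eq_sum_div_card]
  field_simp

end RelIndicator

section TrivialProgressions
variable {k : ℕ} {G : Type*} [AddCommGroup G] [Fintype G]

lemma card_mul_expect_prod_progression_le (hk : 0 < k) {f : G → ℝ} {m : ℝ}
    (f_nonneg : ∀ x, 0 ≤ f x) (f_le : ∀ x, f x ≤ m)
    (hf : ∀ x d : G, d ≠ 0 → ∏ j : Fin k, f (x + (j : ℕ) • d) = 0) :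
    Fintype.card G * 𝔼 p : G × G, ∏ j : Fin k, f (p.1 + (j : ℕ) • p.2) ≤
      m ^ (k - 1) * 𝔼 x, f x := by
  rw [expect_prod_type, mul_expect, mul_expect]
  refine expect_le_expect fun x _ => ?_
  rw [Fintype.card_mul_expect, sum_eq_single 0 (fun d _ hd => hf x d hd) (by simp)]
  simp only [smul_zero, add_zero, prod_const, card_univ, Fintype.card_fin]
  rw [← pow_sub_one_mul hk.ne']
  exact mul_le_mul_of_nonneg_right (pow_le_pow_left₀ (f_nonneg x) (f_le x) _) (f_nonneg x)

end TrivialProgressions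

/-- The trivial progressions contribute at most `m ^ (k - 1) / N`, where `N = card G` and
`m = N / #S`, and `m ^ (2 (k - 1)) ≤ 3 N`. -/
theorem exists_progression_mem_of_linearFormsCondition {k : ℕ} (hk : 3 ≤ k) {δ : ℝ} (hδ : 0 < δ) :
    ∃ η : ℝ, 0 < η ∧ ∃ N₀ : ℕ, ∀ (G : Type) [AddCommGroup G] [Fintype G] [DecidableEq G]
      [IsAddCyclic G] (S A : Finset G), N₀ ≤ Fintype.card G → S.Nonempty →
      LinearFormsCondition (fun (j : Fin k) x => relIndicator S S (progressionForm j x)) η →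
      A ⊆ S → δ * #S ≤ #A → ∃ x d : G, d ≠ 0 ∧ ∀ j : Fin k, x + (j : ℕ) • d ∈ A := by
  obtain ⟨c, hc, η, hη, szemeredi⟩ :=
    exists_le_expect_prod_progression_of_linearFormsCondition hk hδ
  refine ⟨min η (1 / 2), lt_min hη (by norm_num), ⌊3 / c ^ 2⌋₊ + 1,
    fun G _ _ _ _ S A hN hS hL hAS hA => ?_⟩
  have hSpos : (0 : ℝ) < #S := by exact_mod_cast hS.card_pos
  have hNlarge : 3 < Fintype.card G * c ^ 2 :=
    (div_lt_iff₀ (by positivity)).mp ((Nat.lt_floor_add_one _).trans_le (by exact_mod_cast hN))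
  have count := szemeredi G _ (relIndicator S A) (hL.mono (min_le_left _ _)) relIndicator_nonneg
    (relIndicator_mono hAS) (by rwa [expect_relIndicator, le_div_iff₀ hSpos])
  have sparse := hL.sq_pow_le (by rw [Fintype.card_fin]; omega) (min_le_right _ _)
    (fun _ _ => relIndicator_nonneg _) (fun _ _ => sq_relIndicator _)
  rw [Fintype.card_fin] at sparse
  by_contra! hno
  have trivial_count := card_mul_expect_prod_progression_le (f := relIndicator S A) (k := k)
    (by omega) relIndicator_nonneg relIndicator_le fun x d hd => by
      obtain ⟨j, hj⟩ := hno x d hd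
      exact prod_eq_zero (mem_univ j) (by simp [relIndicator, hj])
  have hcN : Fintype.card G * c ≤ ((Fintype.card G : ℝ) / #S) ^ (k - 1) := by
    refine (mul_le_mul_of_nonneg_left count (by positivity)).trans
      (trivial_count.trans (mul_le_of_le_one_right (by positivity) ?_))
    rw [expect_relIndicator, div_le_one hSpos]
    exact_mod_cast card_le_card hAS
  have := (pow_le_pow_left₀ (by positivity) hcN 2).trans sparse
  have hNpos : (0 : ℝ) < Fintype.card G := by exact_mod_cast Fintype.card_pos
  nlinarith [mul_lt_mul_of_pos_left hNlarge hNpos]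

/-! ### The linear forms condition on `ZMod N` -/

lemma avg_eq_expect {α : Type*} [Fintype α] (f : α → ℝ) : avg f = 𝔼 x, f x :=
  (Fintype.expect_eq_sum_div_card f).symm

lemma prod_powerset_erase {ι M : Type*} [Fintype ι] [DecidableEq ι] [CommMonoid M] (j : ι)
    (F : Finset ι → M) : ∏ t ∈ (univ.erase j).powerset, F t =
      ∏ ω : {i // i ≠ j} → Bool, F {i | ∃ h : i ≠ j, ω ⟨i, h⟩} := by
  refine prod_nbij' (fun t i => decide (i.1 ∈ t))
    (fun ω => ({i | ∃ h : i ≠ j, ω ⟨i, h⟩} : Finset ι))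
    (fun _ _ => mem_univ _) (fun ω _ => ?_) (fun t ht => ?_) (fun ω _ => ?_) fun t ht => ?_
  · exact mem_powerset.mpr fun i hi =>
      mem_erase.mpr ⟨(mem_filter.mp hi).2.choose, mem_univ i⟩
  · ext i
    simpa using fun hi => ne_of_mem_erase (mem_powerset.mp ht hi)
  · ext ⟨i, hi⟩
    simp [hi]
  · congr 1
    ext i
    simpa using fun hi => ne_of_mem_erase (mem_powerset.mp ht hi)

section ZMod
variable {k N : ℕ} [NeZero N]

lemma kForm_eq_progressionForm_vertex (j : Fin k) (x₀ x₁ : Fin k → ZMod N)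
    (ω : {i : Fin k // i ≠ j} → Bool) : kForm k N j x₀ x₁ ω =
      progressionForm j (vertex {i | ∃ h : i ≠ j, ω ⟨i, h⟩} fun i => (x₀ i, x₁ i)) := by
  rw [kForm, progressionForm_apply]
  refine sum_congr rfl fun i _ => ?_
  by_cases hi : i = j
  · simp [hi]
  · simp [vertex, hi]

lemma linearFormsCondition_of_kLinearFormsCondition {ν : ZMod N → ℝ} {η : ℝ}
    (h : kLinearFormsCondition k N ν η) :
    LinearFormsCondition (fun (j : Fin k) x => ν (progressionForm j x)) η := by
  classical
  intro w hw
  have hn := h fun j ω =>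
    decide (w j {i | ∃ h : i ≠ j, ω ⟨i, h⟩} = fun x => ν (progressionForm j x))
  rw [avg_eq_expect] at hn
  refine le_of_eq_of_le (congrArg (|· - 1|) ?_) hn
  refine Fintype.expect_equiv (Equiv.arrowProdEquivProdArrow _ _ _) _ _ fun p => ?_
  refine prod_congr rfl fun j _ => ?_
  rw [prod_powerset_erase]
  refine prod_congr rfl fun ω _ => ?_
  rw [kForm_eq_progressionForm_vertex]
  simp only [decide_eq_true_eq]
  split_ifs with hωj
  · rw [hωj]
    rfl
  · rw [(hw j _).resolve_left hωj, Pi.one_apply]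

end ZMod

end RelativeSzemeredi

/-- **Relative Szemerédi theorem, set version.** For every `k ≥ 3` and `δ > 0` there
exist `η > 0` and `N₀` such that for all `N ≥ N₀`: if `S ⊆ ZMod N` is nonempty and
`ν := (N/|S|)·1_S` satisfies the `k`-linear forms condition within `η`, then every
`A ⊆ S` with `|A| ≥ δ|S|` contains a `k`-term arithmetic progression. -/
theorem relative_szemeredi_sets (k : ℕ) (hk : 3 ≤ k) (δ : ℝ) (hδ : 0 < δ) :
    ∃ η : ℝ, 0 < η ∧ ∃ N₀ : ℕ, ∀ N : ℕ, N₀ ≤ N → ∀ [NeZero N],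
      ∀ S : Finset (ZMod N), S.Nonempty →
      kLinearFormsCondition k N
        (fun x => (N : ℝ) / (S.card : ℝ) * if x ∈ S then 1 else 0) η →
      ∀ A : Finset (ZMod N), A ⊆ S → δ * (S.card : ℝ) ≤ (A.card : ℝ) →
      ∃ x d : ZMod N, d ≠ 0 ∧ ∀ i ∈ Finset.range k, x + (i : ZMod N) * d ∈ A := by
  obtain ⟨η, hη, N₀, progression_mem⟩ :=
    RelativeSzemeredi.exists_progression_mem_of_linearFormsCondition hk hδ
  refine ⟨η, hη, N₀, fun N hN _ S hS hν A hAS hA => ?_⟩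
  have hL := RelativeSzemeredi.linearFormsCondition_of_kLinearFormsCondition hν
  obtain ⟨x, d, hd, hxd⟩ := progression_mem (ZMod N) S A (by rwa [ZMod.card]) hS
    (by simpa only [RelativeSzemeredi.relIndicator, ZMod.card] using hL) hAS hA
  exact ⟨x, d, hd, fun i hi => by simpa using hxd ⟨i, mem_range.mp hi⟩⟩
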